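/- arXiv:1109.5199 — 4 statements merged into one kernel-verified Lean document; each statement's English description precedes it below -/
import Mathlib

section
/- Suppose 1/s₁ + 1/s₂ ≤ 1. Then for every admissible a ≥ 0 the map W_a has an absolutely continuous invariant probability measure μ_a whose support is all of [0,1], and W_a is exact with respect to μ_a: for every measurable set A ⊆ [0,1] with μ_a(A) > 0, one has μ_a(W_a^n(A)) → 1 as n → ∞. -/
open MeasureTheory Filter Topology

/-- The W-like map `W_a` with parameters `s₁ s₂ p q r` and perturbation `a`. -/
noncomputable def Wmap (s₁ s₂ p q r a : ℝ) (x : ℝ) : ℝ :=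
  if x < 1/2 - (1/2 + r*a)/(s₁ + p*a) then
    1 - (2*(s₁ + p*a)/(s₁ - 1 + p*a - 2*r*a)) * x
  else if x < 1/2 then
    (s₁ + p*a)*(x - 1/2) + 1/2 + r*a
  else if x < 1/2 + (1/2 + r*a)/(s₂ + q*a) then
    -(s₂ + q*a)*(x - 1/2) + 1/2 + r*a
  else
    1 + (2*(s₂ + q*a)/(s₂ - 1 + q*a - 2*r*a)) * (x - 1)

/-!
`W_a` is a polygonal map whose two outer branches are onto, so only the peak value `h` of the
middle spike obstructs a Markov structure. Integrating a test function `g ∘ W` over `[0, c]` gives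
the integral of `g` over `[0, W c]` times the reciprocal slope at `c`, plus multiples of its
integrals over `[0, 1]` and `[0, h]`. Hence a constant plus the series `∑ wₙ 1_{x ≤ Wⁿ h}`, with
`wₙ` the product of the reciprocal slopes along the orbit of `h`, is an invariant signed density.
It is nonzero because its jump at `h` does not vanish, and the positive part of an invariant signed
density is again invariant: this produces a bounded invariant probability density.

Intervals grow under `W` until one of them contains a zero of `W`, after which they spread over
`[0, 1]`. The only delicate intervals are those around the peak: either the peak is a repelling
fixed point, or the sum of the two reciprocal slopes there is less than `1`, which beats the
folding. Finally, take a set `A` of positive measure. A density point of `A` whose orbit does not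
approach the breakpoints too fast has neighbourhoods that iterates map affinely onto balls of a
fixed radius, so the images of `A` almost fill such a ball and later almost fill `[0, 1]`.
-/

section Covering

open Set

/-- Some iterate of `f` maps `S` onto a superset of `K`. -/
def EventuallyCovers {α : Type*} (f : α → α) (S K : Set α) : Prop :=
  ∃ n : ℕ, K ⊆ f^[n] '' S

namespace EventuallyCovers

variable {α : Type*} {f : α → α} {S S' K : Set α}

lemma of_subset_image (hS : S' ⊆ f '' S) (h : EventuallyCovers f S' K) :
    EventuallyCovers f S K := by
  obtain ⟨n, hn⟩ := h
  refine ⟨n + 1, hn.trans ?_⟩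
  rw [Function.iterate_succ, image_comp]
  exact image_mono hS

lemma mono (hS : S' ⊆ S) (h : EventuallyCovers f S' K) : EventuallyCovers f S K :=
  h.imp fun _ hn => hn.trans (image_mono hS)

end EventuallyCovers

lemma Icc_subset_image_Icc {f : ℝ → ℝ} {u v x y : ℝ} (hf : ContinuousOn f (Icc u v))
    (hx : x ∈ Icc u v) (hy : y ∈ Icc u v) : Icc (f x) (f y) ⊆ f '' Icc u v := by
  have hxy : uIcc x y ⊆ Icc u v := ordConnected_Icc.uIcc_subset hx hy
  exact Icc_subset_uIcc.trans
    ((intermediate_value_uIcc (hf.mono hxy)).trans (image_mono hxy))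

lemma eventuallyCovers_Icc_of_growth {f : ℝ → ℝ} {K : Set ℝ} {Q : ℝ → ℝ → Prop} {θ L : ℝ}
    (hθ : 1 < θ) (hlt : ∀ u v, Q u v → u < v)
    (hlong : ∀ u v, Q u v → L ≤ v - u → EventuallyCovers f (Icc u v) K)
    (hstep : ∀ u v, Q u v → EventuallyCovers f (Icc u v) K ∨
      ∃ u' v', Q u' v' ∧ Icc u' v' ⊆ f '' Icc u v ∧ θ * (v - u) ≤ v' - u')
    {u v : ℝ} (huv : Q u v) : EventuallyCovers f (Icc u v) K := by
  have covers_of_le_pow (n : ℕ) :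
      ∀ u v, Q u v → L ≤ θ ^ n * (v - u) → EventuallyCovers f (Icc u v) K := by
    induction n with
    | zero => simpa using hlong
    | succ n ih =>
      intro u v huv hL
      obtain hcov | ⟨u', v', huv', hsub, hgrow⟩ := hstep u v huv
      · exact hcov
      · refine (ih u' v' huv' ?_).of_subset_image hsub
        calc L ≤ θ ^ n * (θ * (v - u)) := by rwa [← mul_assoc, ← pow_succ]
          _ ≤ θ ^ n * (v' - u') := by gcongr
  obtain ⟨n, hn⟩ := pow_unbounded_of_one_lt (L / (v - u)) hθ
  exact covers_of_le_pow n u v huv ((div_le_iff₀ (sub_pos.2 (hlt u v huv))).1 hn.le)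

lemma eventuallyCovers_Icc_of_repelling_fixedPoint {f : ℝ → ℝ} {K : Set ℝ} {d z σ : ℝ}
    (hf : Continuous f) (hσ : 1 < σ) (hz : f z = z)
    (haffine : ∀ x ∈ Icc d z, f x = z - σ * (z - x))
    (hfar : ∀ u ≤ d, EventuallyCovers f (Icc u z) K) {u : ℝ} (hu : u < z) :
    EventuallyCovers f (Icc u z) K := by
  refine eventuallyCovers_Icc_of_growth (Q := fun u v => u < z ∧ v = z) (L := z - d) hσ
    ?_ ?_ ?_ ⟨hu, rfl⟩
  · rintro u v ⟨hu, rfl⟩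
    exact hu
  · rintro u v ⟨-, rfl⟩ hlen
    exact hfar u (by linarith)
  · rintro u v ⟨hu, rfl⟩
    obtain hud | hdu := le_total u d
    · exact .inl (hfar u hud)
    · have hfu := haffine u ⟨hdu, hu.le⟩
      have hsub := Icc_subset_image_Icc hf.continuousOn (left_mem_Icc.2 hu.le)
        (right_mem_Icc.2 hu.le)
      rw [hz] at hsub
      exact .inr ⟨f u, v, ⟨by nlinarith, rfl⟩, hsub, by linarith⟩

/-- `f` is locally eventually onto on `[a, b]`: every nondegenerate subinterval is mapped onto
a superset of `[a, b]` by some iterate. -/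
def LocallyEventuallyOnto (f : ℝ → ℝ) (a b : ℝ) : Prop :=
  ∀ u v, a ≤ u → u < v → v ≤ b → EventuallyCovers f (Icc u v) (Icc a b)

lemma locallyEventuallyOnto_of_growth {f : ℝ → ℝ} {a b θ : ℝ} (hf : Continuous f)
    (hmaps : MapsTo f (Icc a b) (Icc a b)) (hθ : 1 < θ)
    (hstep : ∀ u v, a ≤ u → u < v → v ≤ b → EventuallyCovers f (Icc u v) (Icc a b) ∨
      ∃ x ∈ Icc u v, ∃ y ∈ Icc u v, θ * (v - u) ≤ f y - f x) :
    LocallyEventuallyOnto f a b := by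
  intro u v hu huv hv
  refine eventuallyCovers_Icc_of_growth (Q := fun u v => a ≤ u ∧ u < v ∧ v ≤ b) (L := b - a + 1)
    hθ (fun _ _ hQ => hQ.2.1) (fun u v hQ hlen => ?_) (fun u v hQ => ?_) ⟨hu, huv, hv⟩
  · linarith [hQ.1, hQ.2.2]
  · refine (hstep u v hQ.1 hQ.2.1 hQ.2.2).imp_right ?_
    rintro ⟨x, hx, y, hy, hgrow⟩
    have hsub : Icc u v ⊆ Icc a b := Icc_subset_Icc hQ.1 hQ.2.2
    have hlt : f x < f y :=
      sub_pos.1 ((mul_pos (one_pos.trans hθ) (sub_pos.2 hQ.2.1)).trans_le hgrow)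
    exact ⟨f x, f y, ⟨(hmaps (hsub hx)).1, hlt, (hmaps (hsub hy)).2⟩,
      Icc_subset_image_Icc hf.continuousOn hx hy, hgrow⟩

lemma LocallyEventuallyOnto.eventuallyCovers_closedBall {f : ℝ → ℝ} {a b y r : ℝ}
    (hf : LocallyEventuallyOnto f a b) (hab : a < b) (hy : y ∈ Icc a b) (hr : 0 < r) :
    EventuallyCovers f (Metric.closedBall y r) (Icc a b) := by
  have hlt : max a (y - r) < min b (y + r) :=
    max_lt (lt_min hab (by linarith [hy.1])) (lt_min (by linarith [hy.2]) (by linarith))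
  refine (hf _ _ (le_max_left _ _) hlt (min_le_left _ _)).mono ?_
  rw [Real.closedBall_eq_Icc]
  exact Icc_subset_Icc (le_max_right _ _) (min_le_right _ _)

end Covering

section InvariantDensity

open Set
open scoped ENNReal NNReal

lemma ofReal_integral_le_lintegral_ofReal {α : Type*} [MeasurableSpace α] {ν : Measure α}
    {f : α → ℝ} (hf : Integrable f ν) :
    ENNReal.ofReal (∫ x, f x ∂ν) ≤ ∫⁻ x, ENNReal.ofReal (f x) ∂ν := by
  rw [integral_eq_lintegral_pos_part_sub_lintegral_neg_part hf]
  exact (ENNReal.ofReal_le_ofReal (sub_le_self _ ENNReal.toReal_nonneg)).trans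
    ENNReal.ofReal_toReal_le

/-- The signed measure `f ∂ν` is invariant under `T`; invariance is tested against measurable
functions bounded by `1`. -/
structure IsInvariantDensity {α : Type*} [MeasurableSpace α] (T : α → α) (ν : Measure α)
    (f : α → ℝ) : Prop where
  measurable : Measurable f
  integrable : Integrable f ν
  integral_mul_comp : ∀ g : α → ℝ, Measurable g → (∀ x, |g x| ≤ 1) →
    ∫ x, f x * g (T x) ∂ν = ∫ x, f x * g x ∂ν

namespace IsInvariantDensity

variable {α : Type*} [MeasurableSpace α] {T : α → α} {ν : Measure α} {f : α → ℝ}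

lemma neg (hf : IsInvariantDensity T ν f) : IsInvariantDensity T ν (fun x => -f x) where
  measurable := hf.measurable.neg
  integrable := hf.integrable.neg
  integral_mul_comp g hg hg1 := by
    simp only [neg_mul, integral_neg, hf.integral_mul_comp g hg hg1]

lemma setIntegral_preimage (hf : IsInvariantDensity T ν f) (hT : Measurable T) {E : Set α}
    (hE : MeasurableSet E) : ∫ x in T ⁻¹' E, f x ∂ν = ∫ x in E, f x ∂ν := by
  have htest := hf.integral_mul_comp (E.indicator 1) (measurable_one.indicator hE) fun x => by
    by_cases hx : x ∈ E <;> simp [hx]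
  rw [← integral_indicator (hT hE), ← integral_indicator hE]
  convert htest using 3 with x x
  · by_cases hx : T x ∈ E <;> simp [hx]
  · by_cases hx : x ∈ E <;> simp [hx]

lemma withDensity_ofReal_le_map (hf : IsInvariantDensity T ν f) (hT : Measurable T) :
    ν.withDensity (fun x => ENNReal.ofReal (f x)) ≤
      (ν.withDensity fun x => ENNReal.ofReal (f x)).map T := by
  refine Measure.le_iff.2 fun E hE => ?_
  set P := {x | 0 < f x}
  have hP : MeasurableSet P := measurableSet_lt measurable_const hf.measurable
  rw [Measure.map_apply hT hE, withDensity_apply _ hE, withDensity_apply _ (hT hE)]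
  calc ∫⁻ x in E, ENNReal.ofReal (f x) ∂ν
      = ∫⁻ x in E ∩ P, ENNReal.ofReal (f x) ∂ν := by
        rw [← lintegral_indicator hE, ← lintegral_indicator (hE.inter hP)]
        congr 1 with x
        by_cases hxE : x ∈ E <;> by_cases hxP : x ∈ P
        · simp [hxE, hxP]
        · simpa [hxE, hxP] using not_lt.1 hxP
        all_goals simp [hxE]
    _ = ENNReal.ofReal (∫ x in E ∩ P, f x ∂ν) := by
        refine (ofReal_integral_eq_lintegral_ofReal hf.integrable.integrableOn ?_).symm
        filter_upwards [ae_restrict_mem (hE.inter hP)] with x hx using (le_of_lt hx.2)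
    _ = ENNReal.ofReal (∫ x in T ⁻¹' (E ∩ P), f x ∂ν) := by
        rw [hf.setIntegral_preimage hT (hE.inter hP)]
    _ ≤ ∫⁻ x in T ⁻¹' (E ∩ P), ENNReal.ofReal (f x) ∂ν :=
        ofReal_integral_le_lintegral_ofReal hf.integrable.integrableOn
    _ ≤ ∫⁻ x in T ⁻¹' E, ENNReal.ofReal (f x) ∂ν :=
        lintegral_mono_set (preimage_mono inter_subset_left)

lemma measurePreserving_withDensity_ofReal (hf : IsInvariantDensity T ν f) (hT : Measurable T) :
    MeasurePreserving T (ν.withDensity fun x => ENNReal.ofReal (f x))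
      (ν.withDensity fun x => ENNReal.ofReal (f x)) := by
  have : IsFiniteMeasure (ν.withDensity fun x => ENNReal.ofReal (f x)) :=
    isFiniteMeasure_withDensity_ofReal hf.integrable.2
  refine ⟨hT, (Measure.eq_of_le_of_measure_univ_eq (hf.withDensity_ofReal_le_map hT) ?_).symm⟩
  rw [Measure.map_apply hT .univ, preimage_univ]

lemma exists_isProbabilityMeasure_of_not_ae_nonpos (hf : IsInvariantDensity T ν f)
    (hT : Measurable T) {M : ℝ≥0} (hM : ∀ x, |f x| ≤ M) (hpos : ¬∀ᵐ x ∂ν, f x ≤ 0) :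
    ∃ μ : Measure α, IsProbabilityMeasure μ ∧ MeasurePreserving T μ μ ∧
      ∃ C : ℝ≥0, μ ≤ C • ν := by
  set μ₀ := ν.withDensity fun x => ENNReal.ofReal (f x)
  have hμ₀ : MeasurePreserving T μ₀ μ₀ := hf.measurePreserving_withDensity_ofReal hT
  have : IsFiniteMeasure μ₀ := isFiniteMeasure_withDensity_ofReal hf.integrable.2
  have : NeZero μ₀ := by
    refine ⟨fun h0 => hpos ?_⟩
    filter_upwards [(withDensity_eq_zero_iff hf.measurable.ennreal_ofReal.aemeasurable).1 h0]
      with x hx using ENNReal.ofReal_eq_zero.1 hx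
  have hμ₀_le : μ₀ ≤ (M : ℝ≥0∞) • ν := by
    rw [← withDensity_const]
    refine withDensity_mono (Eventually.of_forall fun x => ?_)
    exact ENNReal.ofReal_le_of_le_toReal ((le_abs_self _).trans (hM x))
  have hc : (μ₀ univ)⁻¹ ≠ ∞ := ENNReal.inv_ne_top.2 (NeZero.ne _)
  refine ⟨(μ₀ univ)⁻¹ • μ₀, inferInstance, ⟨hT, ?_⟩, ((μ₀ univ)⁻¹).toNNReal * M, ?_⟩
  · rw [Measure.map_smul, hμ₀.map_eq]
  · intro E
    calc (μ₀ univ)⁻¹ * μ₀ E ≤ (μ₀ univ)⁻¹ * (M * ν E) := mul_le_mul_right (hμ₀_le E) _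
      _ = ↑(((μ₀ univ)⁻¹).toNNReal * M) * ν E := by
        rw [ENNReal.coe_mul, ENNReal.coe_toNNReal hc, mul_assoc]

theorem exists_isProbabilityMeasure (hf : IsInvariantDensity T ν f) (hT : Measurable T)
    {M : ℝ≥0} (hM : ∀ x, |f x| ≤ M) (hne : ¬f =ᵐ[ν] 0) :
    ∃ μ : Measure α, IsProbabilityMeasure μ ∧ MeasurePreserving T μ μ ∧
      ∃ C : ℝ≥0, μ ≤ C • ν := by
  by_cases hpos : ∀ᵐ x ∂ν, f x ≤ 0
  · refine hf.neg.exists_isProbabilityMeasure_of_not_ae_nonpos hT (M := M) (by simpa) ?_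
    intro hneg
    refine hne ?_
    filter_upwards [hpos, hneg] with x hx hx' using le_antisymm hx (neg_nonpos.1 hx')
  · exact hf.exists_isProbabilityMeasure_of_not_ae_nonpos hT hM hpos

end IsInvariantDensity

end InvariantDensity

section StepSeries

open Set

lemma intervalIntegrable_of_abs_le_one {g : ℝ → ℝ} (hg : Measurable g) (hg1 : ∀ x, |g x| ≤ 1)
    (u v : ℝ) : IntervalIntegrable g volume u v :=
  (intervalIntegrable_const (c := (1 : ℝ))).mono_fun hg.aestronglyMeasurable
    (Eventually.of_forall fun x => by simpa using hg1 x)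

/-- The pure jump function `∑ aₙ 1_{x ≤ cₙ}`. -/
noncomputable def stepSeries (a c : ℕ → ℝ) (x : ℝ) : ℝ :=
  ∑' n, (Iic (c n)).indicator (fun _ => a n) x

variable {a c : ℕ → ℝ}

lemma norm_indicator_Iic_const_le (x y k : ℝ) : ‖(Iic x).indicator (fun _ => k) y‖ ≤ |k| :=
  norm_indicator_le_norm_self _ _

lemma abs_stepSeries_le (ha : Summable fun n => |a n|) (x : ℝ) :
    |stepSeries a c x| ≤ ∑' n, |a n| :=
  tsum_of_norm_bounded ha.hasSum fun _ => norm_indicator_Iic_const_le _ _ _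

lemma hasSum_stepSeries (ha : Summable fun n => |a n|) (x : ℝ) :
    HasSum (fun n => (Iic (c n)).indicator (fun _ => a n) x) (stepSeries a c x) :=
  (Summable.of_norm_bounded ha fun _ => norm_indicator_Iic_const_le _ _ _).hasSum

lemma measurable_stepSeries (ha : Summable fun n => |a n|) : Measurable (stepSeries a c) := by
  refine measurable_of_tendsto_metrizable (f := fun N x =>
    ∑ n ∈ Finset.range N, (Iic (c n)).indicator (fun _ => a n) x) (fun N => ?_)
    (tendsto_pi_nhds.2 fun x => (hasSum_stepSeries ha x).tendsto_sum_nat)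
  exact Finset.measurable_sum _ fun n _ => measurable_const.indicator measurableSet_Iic

lemma tendsto_stepSeries_nhdsLT (ha : Summable fun n => |a n|) (x : ℝ) :
    Tendsto (stepSeries a c) (𝓝[<] x) (𝓝 (stepSeries a c x)) := by
  refine tendsto_tsum_of_dominated_convergence ha (fun n => ?_)
    (Eventually.of_forall fun y n => norm_indicator_Iic_const_le _ _ _)
  refine tendsto_const_nhds.congr' ?_
  obtain hxc | hcx := le_or_gt x (c n)
  · filter_upwards [self_mem_nhdsWithin] with y hy
    simp [hxc, (mem_Iio.1 hy).le.trans hxc]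
  · filter_upwards [Ioo_mem_nhdsLT hcx] with y hy
    simp [hcx, hy.1]

lemma tendsto_stepSeries_nhdsGT (ha : Summable fun n => |a n|) (x : ℝ) :
    Tendsto (stepSeries a c) (𝓝[>] x)
      (𝓝 (stepSeries a c x - ∑' n, if c n = x then a n else 0)) := by
  have hjump : Summable fun n => if c n = x then a n else 0 :=
    .of_norm_bounded ha fun n => by split_ifs <;> simp
  rw [stepSeries, ← (hasSum_stepSeries ha x).summable.tsum_sub hjump]
  refine tendsto_tsum_of_dominated_convergence ha (fun n => ?_)
    (Eventually.of_forall fun y n => norm_indicator_Iic_const_le _ _ _)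
  refine tendsto_const_nhds.congr' ?_
  obtain hcx | rfl | hxc := lt_trichotomy (c n) x
  · filter_upwards [self_mem_nhdsWithin] with y hy
    simp [hcx, hcx.ne, hcx.trans (mem_Ioi.1 hy)]
  · filter_upwards [self_mem_nhdsWithin] with y hy
    simp [mem_Ioi.1 hy]
  · filter_upwards [Ioo_mem_nhdsGT hxc] with y hy
    simp [hxc.le, hxc.ne', hy.2.le]

lemma frequently_nhdsWithin_of_ae_of_isOpen {X : Type*} [TopologicalSpace X] [MeasurableSpace X]
    {μ : Measure X} [μ.IsOpenPosMeasure] {s : Set X} {p : X → Prop} {x : X} (hs : IsOpen s)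
    (hx : x ∈ closure s) (hp : ∀ᵐ y ∂μ, y ∈ s → p y) : ∃ᶠ y in 𝓝[s] x, p y := by
  have hdense : Dense {y | y ∈ s → p y} := Measure.dense_of_ae hp
  have hx' : x ∈ closure (s ∩ {y | y ∈ s → p y}) :=
    closure_minimal (hdense.open_subset_closure_inter hs) isClosed_closure hx
  rw [frequently_nhdsWithin_iff]
  exact (mem_closure_iff_frequently.1 hx').mono fun y hy => ⟨hy.2 hy.1, hy.1⟩

lemma tsum_jump_eq_zero_of_ae_eq_const (ha : Summable fun n => |a n|) {u v x k : ℝ}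
    (hx : x ∈ Ioo u v) (hk : ∀ᵐ y, y ∈ Ioo u v → stepSeries a c y = k) :
    ∑' n, (if c n = x then a n else 0) = 0 := by
  have hleft : stepSeries a c x = k := by
    refine tendsto_nhds_unique_of_frequently_eq
      ((tendsto_stepSeries_nhdsLT ha x).mono_left (nhdsWithin_mono x Ioo_subset_Iio_self))
      tendsto_const_nhds (frequently_nhdsWithin_of_ae_of_isOpen (μ := volume) (s := Ioo u x)
        isOpen_Ioo (by simp [closure_Ioo hx.1.ne, hx.1.le]) ?_)
    filter_upwards [hk] with y hy hyx using hy ⟨hyx.1, hyx.2.trans hx.2⟩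
  have hright : stepSeries a c x - ∑' n, (if c n = x then a n else 0) = k := by
    refine tendsto_nhds_unique_of_frequently_eq
      ((tendsto_stepSeries_nhdsGT ha x).mono_left (nhdsWithin_mono x Ioo_subset_Ioi_self))
      tendsto_const_nhds (frequently_nhdsWithin_of_ae_of_isOpen (μ := volume) (s := Ioo x v)
        isOpen_Ioo (by simp [closure_Ioo hx.2.ne, hx.2.le]) ?_)
    filter_upwards [hk] with y hy hyx using hy ⟨hx.1.trans hyx.1, hyx.2⟩
  linarith

lemma hasSum_integral_stepSeries_mul (ha : Summable fun n => |a n|) {u v : ℝ}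
    (hc : ∀ n, c n ∈ Icc u v) {g : ℝ → ℝ} (hg : Measurable g) (hg1 : ∀ x, |g x| ≤ 1) :
    HasSum (fun n => a n * ∫ x in u..c n, g x) (∫ x in Ioc u v, stepSeries a c x * g x) := by
  have hterm (n : ℕ) : a n * ∫ x in u..c n, g x =
      ∫ x in Ioc u v, (Iic (c n)).indicator (fun _ => a n) x * g x := by
    rw [intervalIntegral.integral_of_le (hc n).1, ← integral_const_mul]
    simp only [← indicator_mul_left]
    rw [setIntegral_indicator measurableSet_Iic, Ioc_inter_Iic, min_eq_right (hc n).2]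
  simp only [hterm]
  refine hasSum_integral_of_dominated_convergence (fun n _ => |a n|) (fun n => ?_) (fun n => ?_)
    (Eventually.of_forall fun _ => ha) (integrable_const _) ?_
  · exact ((measurable_const.indicator measurableSet_Iic).mul hg).aestronglyMeasurable
  · refine Eventually.of_forall fun x => ?_
    rw [norm_mul]
    exact (mul_le_of_le_one_right (norm_nonneg _) (hg1 x)).trans
      (norm_indicator_Iic_const_le _ _ _)
  · exact Eventually.of_forall fun x => (hasSum_stepSeries ha x).mul_right _

end StepSeries

section OrbitWeight

open Function

/-- The cocycle `∏_{i < n} γ (fⁱ x)` of weights accumulated along the orbit of `x`. -/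
def orbitWeight {α : Type*} (f : α → α) (γ : α → ℝ) (x : α) (n : ℕ) : ℝ :=
  ∏ i ∈ Finset.range n, γ (f^[i] x)

variable {α : Type*} {f : α → α} {γ : α → ℝ} {x : α}

lemma orbitWeight_succ (n : ℕ) :
    orbitWeight f γ x (n + 1) = orbitWeight f γ x n * γ (f^[n] x) :=
  Finset.prod_range_succ _ n

lemma orbitWeight_add (m n : ℕ) :
    orbitWeight f γ x (m + n) = orbitWeight f γ x m * orbitWeight f γ (f^[m] x) n := by
  rw [orbitWeight, Finset.prod_range_add]
  simp only [orbitWeight, ← iterate_add_apply, add_comm]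

lemma summable_abs_orbitWeight {θ : ℝ} (hθ : θ < 1) (hγ : ∀ y, |γ y| ≤ θ) :
    Summable fun n => |orbitWeight f γ x n| := by
  have hθ0 : 0 ≤ θ := (abs_nonneg _).trans (hγ x)
  refine .of_nonneg_of_le (fun n => abs_nonneg _) (fun n => ?_)
    (summable_geometric_of_lt_one hθ0 hθ)
  rw [orbitWeight, Finset.abs_prod]
  simpa using Finset.prod_le_prod (fun i _ => abs_nonneg (γ (f^[i] x)))
    (fun i (_ : i ∈ Finset.range n) => hγ (f^[i] x))

-- Splitting the sum after one period `k` gives `S = 1 + w_k * S`, which excludes `S = 0`.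
lemma tsum_orbitWeight_return_ne_zero [DecidableEq α]
    (hw : Summable fun n => |orbitWeight f γ x n|) :
    ∑' n, (if f^[n] x = x then orbitWeight f γ x n else 0) ≠ 0 := by
  set F : ℕ → ℝ := fun n => if f^[n] x = x then orbitWeight f γ x n else 0
  have hF0 : F 0 = 1 := by simp [F, orbitWeight]
  have hF_pos {n : ℕ} (hn : n ≠ 0) (hn_lt : minimalPeriod f x = 0 ∨ n < minimalPeriod f x) :
      F n = 0 := by
    refine if_neg fun hper => ?_
    have hn_per : IsPeriodicPt f n x := hper
    have := hn_per.minimalPeriod_pos (Nat.pos_of_ne_zero hn)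
    have := hn_per.minimalPeriod_le (Nat.pos_of_ne_zero hn)
    omega
  obtain hk | hk := eq_or_ne (minimalPeriod f x) 0
  · rw [tsum_eq_single 0 fun n hn => hF_pos hn (.inl hk), hF0]
    exact one_ne_zero
  have hF : Summable F := .of_norm_bounded hw fun n => by
    simp only [F]
    split_ifs <;> simp
  have hinitial : ∑ n ∈ Finset.range (minimalPeriod f x), F n = 1 := by
    rw [Finset.sum_eq_single_of_mem 0 (Finset.mem_range.2 (Nat.pos_of_ne_zero hk))
      fun n hn hn0 => hF_pos hn0 (.inr (Finset.mem_range.1 hn)), hF0]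
  have hshift (n : ℕ) :
      F (n + minimalPeriod f x) = orbitWeight f γ x (minimalPeriod f x) * F n := by
    simp only [F, iterate_add_minimalPeriod_eq, mul_ite, mul_zero]
    rw [add_comm n, orbitWeight_add, iterate_minimalPeriod]
  have hsplit := hF.sum_add_tsum_nat_add (minimalPeriod f x)
  simp only [hinitial, hshift, tsum_mul_left] at hsplit
  intro hzero
  rw [hzero] at hsplit
  simp at hsplit

end OrbitWeight

section ExpandingPiecewiseAffine

open Set Metric
open scoped ENNReal NNReal

lemma volume_image_le_of_lipschitzOnWith {f : ℝ → ℝ} {K : ℝ≥0} {S : Set ℝ}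
    (hf : LipschitzOnWith K f S) : volume (f '' S) ≤ K * volume S := by
  simpa [hausdorffMeasure_real] using hf.hausdorffMeasure_image_le zero_le_one

lemma ae_mem_imp_tendsto_measure_closedBall_diff_div {E : Type*} [MetricSpace E]
    [MeasurableSpace E] [BorelSpace E] [SecondCountableTopology E] [HasBesicovitchCovering E]
    (ν : Measure E) [IsLocallyFiniteMeasure ν] {A : Set E} (hA : MeasurableSet A) :
    ∀ᵐ x ∂ν, x ∈ A →
      Tendsto (fun ρ => ν (closedBall x ρ \ A) / ν (closedBall x ρ)) (𝓝[>] 0) (𝓝 0) := by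
  filter_upwards [Besicovitch.ae_tendsto_measure_inter_div_of_measurableSet ν hA.compl]
    with x hx hxA
  simpa [hxA, sdiff_eq, inter_comm] using hx

lemma measure_setOf_eventually_mem_le {α : Type*} [MeasurableSpace α] {μ : Measure α}
    {s : ℕ → Set α} {ε : ℝ≥0∞} (hs : ∀ n, μ (s n) ≤ ε) :
    μ {x | ∀ᶠ n in atTop, x ∈ s n} ≤ ε := by
  have hmono : Monotone fun N => ⋂ n ≥ N, s n := fun N N' hN =>
    biInter_subset_biInter_left fun n hn => hN.trans hn
  have hunion : {x | ∀ᶠ n in atTop, x ∈ s n} = ⋃ N, ⋂ n ≥ N, s n := by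
    ext x
    simp [eventually_atTop]
  rw [hunion, hmono.measure_iUnion]
  exact iSup_le fun N => (measure_mono (biInter_subset_of_mem le_rfl)).trans (hs N)

/-- `f` is affine with slope at least `l > 1` in absolute value on every interval whose interior
avoids the finite set `B` of breakpoints. -/
structure IsExpandingPiecewiseAffine (f : ℝ → ℝ) (B : Finset ℝ) (l : ℝ) : Prop where
  one_lt : 1 < l
  exists_slope : ∀ u v, Disjoint (Ioo u v) (B : Set ℝ) →
    ∃ t, l ≤ |t| ∧ ∀ x ∈ Icc u v, ∀ y ∈ Icc u v, f y = f x + t * (y - x)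

lemma IsExpandingPiecewiseAffine.exists_le_sub {f : ℝ → ℝ} {B : Finset ℝ} {l u v : ℝ}
    (hf : IsExpandingPiecewiseAffine f B l) (hdisj : Disjoint (Ioo u v) (B : Set ℝ))
    (huv : u ≤ v) : ∃ x ∈ Icc u v, ∃ y ∈ Icc u v, l * (v - u) ≤ f y - f x := by
  obtain ⟨t, hlt, ht⟩ := hf.exists_slope u v hdisj
  have hu : u ∈ Icc u v := left_mem_Icc.2 huv
  have hv : v ∈ Icc u v := right_mem_Icc.2 huv
  have hgrow : l * (v - u) ≤ |t| * (v - u) := mul_le_mul_of_nonneg_right hlt (sub_nonneg.2 huv)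
  have hfv := ht u hu v hv
  obtain ht0 | ht0 := abs_cases t
  · exact ⟨u, hu, v, hv, by rw [ht0.1] at hgrow; linarith⟩
  · exact ⟨v, hv, u, hu, by rw [ht0.1] at hgrow; linarith⟩

/-- The points whose orbit up to time `n` passes too close to the breakpoints in `B`: outside this
set, `f^[n]` is affine on a neighbourhood that it maps onto a ball of radius `η`. -/
def closeApproachSet (f : ℝ → ℝ) (B : Finset ℝ) (l η : ℝ) : ℕ → Set ℝ
  | 0 => ∅
  | n + 1 => thickening (η / l ^ (n + 1)) (B : Set ℝ) ∪ f ⁻¹' closeApproachSet f B l η n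

variable {f : ℝ → ℝ} {B : Finset ℝ} {l η a b : ℝ} {K C : ℝ≥0} {μ : Measure ℝ} {A : Set ℝ}

lemma measurableSet_closeApproachSet (hf : Measurable f) (n : ℕ) :
    MeasurableSet (closeApproachSet f B l η n) := by
  induction n with
  | zero => exact .empty
  | succ n ih => exact isOpen_thickening.measurableSet.union (hf ih)

lemma IsExpandingPiecewiseAffine.exists_iterate_slope (hf : IsExpandingPiecewiseAffine f B l)
    (hη : 0 < η) (n : ℕ) {x : ℝ} (hx : x ∉ closeApproachSet f B l η n) :
    ∃ s, l ^ n ≤ |s| ∧ ∀ y ∈ closedBall x (η / |s|), f^[n] y = f^[n] x + s * (y - x) := by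
  induction n generalizing x with
  | zero => exact ⟨1, by simp, by simp⟩
  | succ n ih =>
    have hl : 0 < l := one_pos.trans hf.one_lt
    obtain ⟨hxB, hfx⟩ := not_or.1 hx
    obtain ⟨s, hs, hs_affine⟩ := ih hfx
    set ρ := η / l ^ (n + 1)
    have hdisj : Disjoint (Ioo (x - ρ) (x + ρ)) (B : Set ℝ) := by
      rw [← Real.ball_eq_Ioo, Set.disjoint_right]
      exact fun c hcB hcx => hxB (mem_thickening_iff.2 ⟨c, hcB, mem_ball'.1 hcx⟩)
    obtain ⟨t, ht, ht_affine⟩ := hf.exists_slope _ _ hdisj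
    rw [← Real.closedBall_eq_Icc] at ht_affine
    have hst : l ^ (n + 1) ≤ |s * t| := by
      rw [abs_mul, pow_succ]
      gcongr
    have hρ : 0 ≤ ρ := by positivity
    refine ⟨s * t, hst, fun y hy => ?_⟩
    have hyρ : y ∈ closedBall x ρ :=
      closedBall_subset_closedBall (div_le_div_of_nonneg_left hη.le (by positivity) hst) hy
    have hfy : f y = f x + t * (y - x) := ht_affine x (mem_closedBall_self hρ) y hyρ
    have hfy_mem : f y ∈ closedBall (f x) (η / |s|) := by
      have ht_pos : 0 < |t| := hl.trans_le ht
      have hs_pos : 0 < |s| := (pow_pos hl n).trans_le hs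
      rw [mem_closedBall, Real.dist_eq, abs_mul, le_div_iff₀ (by positivity)] at hy
      rw [mem_closedBall, Real.dist_eq, hfy, add_sub_cancel_left, abs_mul,
        le_div_iff₀ hs_pos]
      linarith
    rw [Function.iterate_succ_apply, Function.iterate_succ_apply, hs_affine _ hfy_mem, hfy]
    ring

lemma volume_closedBall_diff_image_le_of_affine {x s : ℝ} (hη : 0 < η) (hs : s ≠ 0)
    (hf : ∀ y ∈ closedBall x (η / |s|), f y = f x + s * (y - x)) :
    volume (closedBall (f x) η \ f '' A) ≤ ENNReal.ofReal (2 * η) *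
      (volume (closedBall x (η / |s|) \ A) / volume (closedBall x (η / |s|))) := by
  have hsub : closedBall (f x) η \ f '' A ⊆ f '' (closedBall x (η / |s|) \ A) := by
    rintro z ⟨hz, hzA⟩
    have hpre : x + (z - f x) / s ∈ closedBall x (η / |s|) := by
      rw [mem_closedBall, Real.dist_eq] at hz ⊢
      rw [add_sub_cancel_left, abs_div]
      gcongr
    have himage : f (x + (z - f x) / s) = z := by
      rw [hf _ hpre]
      field_simp
      ring
    exact ⟨_, ⟨hpre, fun hA => hzA ⟨_, hA, himage⟩⟩, himage⟩
  have hlip : LipschitzOnWith ‖s‖₊ f (closedBall x (η / |s|) \ A) := by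
    refine .of_dist_le_mul fun y hy z hz => le_of_eq ?_
    rw [hf y hy.1, hf z hz.1, Real.dist_eq, Real.dist_eq, coe_nnnorm, Real.norm_eq_abs, ← abs_mul]
    congr 1
    ring
  have hscale : (‖s‖₊ : ℝ≥0∞) = ENNReal.ofReal (2 * η) / volume (closedBall x (η / |s|)) := by
    rw [Real.volume_closedBall, ← ENNReal.ofReal_div_of_pos (by positivity),
      ← enorm_eq_nnnorm, Real.enorm_eq_ofReal_abs]
    congr 1
    field_simp
  calc volume (closedBall (f x) η \ f '' A)
      ≤ ‖s‖₊ * volume (closedBall x (η / |s|) \ A) :=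
        (measure_mono hsub).trans (volume_image_le_of_lipschitzOnWith hlip)
    _ = _ := by simp only [hscale, ENNReal.div_eq_inv_mul, mul_left_comm, mul_assoc]

lemma measure_thickening_finset_le (hμC : μ ≤ C • volume) (δ : ℝ) :
    μ (thickening δ (B : Set ℝ)) ≤ C * (B.card * ENNReal.ofReal (2 * δ)) := by
  rw [thickening_eq_biUnion_ball]
  calc μ (⋃ c ∈ (B : Set ℝ), ball c δ)
      ≤ C * volume (⋃ c ∈ (B : Set ℝ), ball c δ) := hμC _
    _ ≤ C * ∑ c ∈ B, volume (ball c δ) := by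
        gcongr
        exact measure_biUnion_finset_le B _
    _ = C * (B.card * ENNReal.ofReal (2 * δ)) := by simp

lemma measure_closeApproachSet_le (hl : 1 < l) (hη : 0 < η)
    (hμ : MeasurePreserving f μ μ) (hμC : μ ≤ C • volume) (n : ℕ) :
    μ (closeApproachSet f B l η n) ≤
      C * (B.card * ENNReal.ofReal (2 * η * (1 - (l ^ n)⁻¹) / (l - 1))) := by
  have hl1 : 0 < l - 1 := sub_pos.2 hl
  induction n with
  | zero => simp [closeApproachSet]
  | succ n ih =>
    have hnonneg : 0 ≤ 2 * η * (1 - (l ^ n)⁻¹) / (l - 1) := by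
      have := inv_le_one_of_one_le₀ (one_le_pow₀ hl.le : 1 ≤ l ^ n)
      have := sub_nonneg.2 this
      positivity
    have hgeom : 2 * (η / l ^ (n + 1)) + 2 * η * (1 - (l ^ n)⁻¹) / (l - 1) =
        2 * η * (1 - (l ^ (n + 1))⁻¹) / (l - 1) := by
      field_simp
      ring
    calc μ (closeApproachSet f B l η (n + 1))
        ≤ μ (thickening (η / l ^ (n + 1)) (B : Set ℝ))
            + μ (f ⁻¹' closeApproachSet f B l η n) := measure_union_le _ _
      _ ≤ C * (B.card * ENNReal.ofReal (2 * (η / l ^ (n + 1))))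
            + C * (B.card * ENNReal.ofReal (2 * η * (1 - (l ^ n)⁻¹) / (l - 1))) := by
          rw [hμ.measure_preimage
            (measurableSet_closeApproachSet hμ.measurable n).nullMeasurableSet]
          exact add_le_add (measure_thickening_finset_le hμC _) ih
      _ = _ := by
          rw [← mul_add, ← mul_add, ← ENNReal.ofReal_add (by positivity) hnonneg, hgeom]

lemma exists_forall_measure_closeApproachSet_le (hl : 1 < l)
    (hμ : MeasurePreserving f μ μ) (hμC : μ ≤ C • volume) {ε : ℝ≥0∞} (hε : ε ≠ 0) :
    ∃ η > 0, ∀ n, μ (closeApproachSet f B l η n) ≤ ε := by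
  have hl1 : 0 < l - 1 := sub_pos.2 hl
  obtain ⟨κ, hκ, hκε⟩ := ENNReal.exists_nnreal_pos_mul_lt (a := C * B.card) (by finiteness) hε
  have hκ_pos : (0 : ℝ) < κ := hκ
  refine ⟨κ * (l - 1) / 2, by positivity, fun n => ?_⟩
  calc μ (closeApproachSet f B l (κ * (l - 1) / 2) n)
      ≤ C * (B.card * ENNReal.ofReal (2 * (κ * (l - 1) / 2) * (1 - (l ^ n)⁻¹) / (l - 1))) :=
        measure_closeApproachSet_le hl (by positivity) hμ hμC n
    _ ≤ C * (B.card * ENNReal.ofReal κ) := by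
        gcongr
        have : (0 : ℝ) ≤ (l ^ n)⁻¹ := by positivity
        rw [div_le_iff₀ hl1]
        nlinarith [mul_pos hκ_pos hl1]
    _ = κ * (C * B.card) := by
        rw [ENNReal.ofReal_coe_nnreal]
        ring
    _ ≤ ε := hκε.le

lemma IsExpandingPiecewiseAffine.eventually_volume_closedBall_diff_image_le
    (hf : IsExpandingPiecewiseAffine f B l) (hη : 0 < η) {x : ℝ}
    (hx : Tendsto (fun ρ => volume (closedBall x ρ \ A) / volume (closedBall x ρ))
      (𝓝[>] 0) (𝓝 0)) {δ : ℝ≥0∞} (hδ : δ ≠ 0) :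
    ∀ᶠ n in atTop, x ∉ closeApproachSet f B l η n →
      volume (closedBall (f^[n] x) η \ f^[n] '' A) ≤ δ := by
  obtain ⟨κ, hκ, hκδ⟩ := ENNReal.exists_nnreal_pos_mul_lt
    (a := ENNReal.ofReal (2 * η)) ENNReal.ofReal_ne_top hδ
  have hdensity : ∀ᶠ ρ in 𝓝[>] 0, volume (closedBall x ρ \ A) / volume (closedBall x ρ) ≤ κ :=
    hx.eventually (ge_mem_nhds (by exact_mod_cast hκ))
  obtain ⟨ρ₀, hρ₀, hρ₀_density⟩ := mem_nhdsGT_iff_exists_Ioc_subset.1 hdensity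
  have hradius : Tendsto (fun n : ℕ => η / l ^ n) atTop (𝓝 0) :=
    (tendsto_pow_atTop_atTop_of_one_lt hf.one_lt).const_div_atTop η
  filter_upwards [hradius.eventually (ge_mem_nhds hρ₀)] with n hn hxn
  obtain ⟨s, hs, hs_affine⟩ := hf.exists_iterate_slope hη n hxn
  have hln : 0 < l ^ n := pow_pos (one_pos.trans hf.one_lt) n
  have hs_pos : 0 < |s| := hln.trans_le hs
  have hsmall : η / |s| ∈ Ioc 0 ρ₀ := by
    refine ⟨by positivity, le_trans ?_ hn⟩
    gcongr
  calc volume (closedBall (f^[n] x) η \ f^[n] '' A)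
      ≤ ENNReal.ofReal (2 * η) *
          (volume (closedBall x (η / |s|) \ A) / volume (closedBall x (η / |s|))) :=
        volume_closedBall_diff_image_le_of_affine hη (abs_pos.1 hs_pos) hs_affine
    _ ≤ ENNReal.ofReal (2 * η) * κ := by
        gcongr
        exact hρ₀_density hsmall
    _ ≤ δ := by
        rw [mul_comm]
        exact hκδ.le

lemma exists_tendsto_density_and_frequently_notMem_closeApproachSet (hl : 1 < l)
    (hμ : MeasurePreserving f μ μ) (hμC : μ ≤ C • volume) (hA : MeasurableSet A) (hμA : μ A ≠ 0) :
    ∃ η > 0, ∃ x ∈ A,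
      Tendsto (fun ρ => volume (closedBall x ρ \ A) / volume (closedBall x ρ)) (𝓝[>] 0) (𝓝 0) ∧
      ∃ᶠ n in atTop, x ∉ closeApproachSet f B l η n := by
  obtain ⟨ε, hε, hεA⟩ := exists_between (pos_iff_ne_zero.2 hμA)
  obtain ⟨η, hη, hηε⟩ :=
    exists_forall_measure_closeApproachSet_le (B := B) hl hμ hμC hε.ne'
  have hdensity : ∀ᵐ x ∂μ, x ∈ A →
      Tendsto (fun ρ => volume (closedBall x ρ \ A) / volume (closedBall x ρ)) (𝓝[>] 0) (𝓝 0) :=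
    (Measure.absolutelyContinuous_of_le_smul hμC).ae_le
      (ae_mem_imp_tendsto_measure_closedBall_diff_div volume hA)
  by_contra! hnone
  refine hεA.not_ge ?_
  calc μ A ≤ μ {x | ∀ᶠ n in atTop, x ∈ closeApproachSet f B l η n} := by
        refine measure_mono_ae ?_
        filter_upwards [hdensity] with x hx hxA
        exact hnone η hη x hxA (hx hxA)
    _ ≤ ε := measure_setOf_eventually_mem_le hηε

lemma IsExpandingPiecewiseAffine.exists_closedBall_forall_exists_volume_diff_image_le
    (hf : IsExpandingPiecewiseAffine f B l) (hmaps : MapsTo f (Icc a b) (Icc a b))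
    (hμ : MeasurePreserving f μ μ) (hμC : μ ≤ C • volume) (hAab : A ⊆ Icc a b)
    (hA : MeasurableSet A) (hμA : μ A ≠ 0) :
    ∃ y ∈ Icc a b, ∃ ρ > 0, ∀ δ ≠ 0, ∃ n, volume (closedBall y ρ \ f^[n] '' A) ≤ δ := by
  obtain ⟨η, hη, x, hxA, hx_density, hx_freq⟩ :=
    exists_tendsto_density_and_frequently_notMem_closeApproachSet (B := B) hf.one_lt hμ
      hμC hA hμA
  set G : Set ℕ := {n | x ∉ closeApproachSet f B l η n}
  have : NeBot (atTop ⊓ 𝓟 G) := frequently_mem_iff_neBot.1 hx_freq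
  obtain ⟨y, hy, hy_cluster⟩ := (isCompact_Icc (a := a) (b := b)).exists_mapClusterPt_of_frequently
    (l := atTop ⊓ 𝓟 G) (f := fun n => f^[n] x)
    (Eventually.of_forall fun n => hmaps.iterate n (hAab hxA)).frequently
  refine ⟨y, hy, η / 2, by positivity, fun δ hδ => ?_⟩
  have hclose : ∃ᶠ n in atTop ⊓ 𝓟 G, f^[n] x ∈ ball y (η / 2) :=
    hy_cluster.frequently (ball_mem_nhds y (by positivity))
  have hgood : ∀ᶠ n in atTop ⊓ 𝓟 G, volume (closedBall (f^[n] x) η \ f^[n] '' A) ≤ δ :=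
    eventually_inf_principal.2 (hf.eventually_volume_closedBall_diff_image_le hη hx_density hδ)
  obtain ⟨n, hn_close, hn⟩ := (hclose.and_eventually hgood).exists
  refine ⟨n, (measure_mono (sdiff_subset_sdiff_left ?_)).trans hn⟩
  exact closedBall_subset_closedBall' (by linarith [mem_ball'.1 hn_close])

theorem IsExpandingPiecewiseAffine.exists_volume_Icc_diff_image_le
    (hf : IsExpandingPiecewiseAffine f B l) (hlip : LipschitzWith K f)
    (hleo : LocallyEventuallyOnto f a b) (hab : a < b) (hmaps : MapsTo f (Icc a b) (Icc a b))
    (hμ : MeasurePreserving f μ μ) (hμC : μ ≤ C • volume) (hAab : A ⊆ Icc a b)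
    (hA : MeasurableSet A) (hμA : μ A ≠ 0) {ε : ℝ≥0∞} (hε : ε ≠ 0) :
    ∃ n, volume (Icc a b \ f^[n] '' A) ≤ ε := by
  obtain ⟨y, hy, ρ, hρ, hball⟩ := hf.exists_closedBall_forall_exists_volume_diff_image_le
    hmaps hμ hμC hAab hA hμA
  obtain ⟨N, hN⟩ := hleo.eventuallyCovers_closedBall hab hy hρ
  obtain ⟨δ, hδ, hδε⟩ := ENNReal.exists_nnreal_pos_mul_lt (a := ↑(K ^ N)) ENNReal.coe_ne_top hε
  obtain ⟨n, hn⟩ := hball δ (by exact_mod_cast hδ.ne')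
  have hsub : Icc a b \ f^[N + n] '' A ⊆ f^[N] '' (closedBall y ρ \ f^[n] '' A) := by
    rw [Function.iterate_add, image_comp]
    rintro z ⟨hz, hzA⟩
    obtain ⟨w, hw, rfl⟩ := hN hz
    exact ⟨w, ⟨hw, fun hwA => hzA (mem_image_of_mem _ hwA)⟩, rfl⟩
  refine ⟨N + n, ?_⟩
  calc volume (Icc a b \ f^[N + n] '' A)
      ≤ ↑(K ^ N) * volume (closedBall y ρ \ f^[n] '' A) :=
        (measure_mono hsub).trans
          (volume_image_le_of_lipschitzOnWith ((hlip.iterate N).lipschitzOnWith))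
    _ ≤ ↑(K ^ N) * δ := by gcongr
    _ ≤ ε := by
        rw [mul_comm]
        exact hδε.le

theorem IsExpandingPiecewiseAffine.tendsto_measure_image_iterate [IsProbabilityMeasure μ]
    (hf : IsExpandingPiecewiseAffine f B l) (hlip : LipschitzWith K f)
    (hleo : LocallyEventuallyOnto f a b) (hab : a < b) (hmaps : MapsTo f (Icc a b) (Icc a b))
    (hμ : MeasurePreserving f μ μ) (hμC : μ ≤ C • volume) (hμ_Icc : μ (Icc a b)ᶜ = 0)
    (hAab : A ⊆ Icc a b) (hA : MeasurableSet A) (hμA : μ A ≠ 0) :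
    Tendsto (fun n => μ (f^[n] '' A)) atTop (𝓝 1) := by
  have hmono : Monotone fun n => μ (f^[n] '' A) := by
    refine monotone_nat_of_le_succ fun n => ?_
    rw [Function.iterate_succ', image_comp]
    exact (measure_mono (subset_preimage_image f _)).trans (hμ.measure_preimage_le _)
  suffices hsup : ⨆ n, μ (f^[n] '' A) = 1 from hsup ▸ tendsto_atTop_iSup hmono
  refine le_antisymm (iSup_le fun n => prob_le_one) ?_
  refine ENNReal.le_of_forall_pos_le_add fun ε hε _ => ?_
  obtain ⟨δ, hδ, hδε⟩ := ENNReal.exists_nnreal_pos_mul_lt (a := C) ENNReal.coe_ne_top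
    (by exact_mod_cast hε.ne' : (ε : ℝ≥0∞) ≠ 0)
  obtain ⟨n, hn⟩ := hf.exists_volume_Icc_diff_image_le hlip hleo hab hmaps hμ hμC hAab hA hμA
    (by exact_mod_cast hδ.ne' : (δ : ℝ≥0∞) ≠ 0)
  calc 1 = μ (Icc a b) := ((prob_compl_eq_zero_iff measurableSet_Icc).1 hμ_Icc).symm
    _ ≤ μ (Icc a b ∩ f^[n] '' A) + μ (Icc a b \ f^[n] '' A) := measure_le_inter_add_sdiff _ _ _
    _ ≤ (⨆ n, μ (f^[n] '' A)) + C * δ := by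
        gcongr
        · exact (measure_mono inter_subset_right).trans (le_iSup (fun n => μ (f^[n] '' A)) n)
        · exact (hμC _).trans (mul_le_mul_right hn _)
    _ ≤ (⨆ n, μ (f^[n] '' A)) + ε := by
        gcongr
        rw [mul_comm]
        exact hδε.le

theorem IsExpandingPiecewiseAffine.measure_pos_of_isOpen [IsProbabilityMeasure μ]
    (hf : IsExpandingPiecewiseAffine f B l) (hlip : LipschitzWith K f)
    (hleo : LocallyEventuallyOnto f a b) (hab : a < b) (hmaps : MapsTo f (Icc a b) (Icc a b))
    (hμ : MeasurePreserving f μ μ) (hμC : μ ≤ C • volume) (hμ_Icc : μ (Icc a b)ᶜ = 0)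
    {U : Set ℝ} (hU : IsOpen U) (hU_Icc : (U ∩ Icc a b).Nonempty) : 0 < μ U := by
  rw [pos_iff_ne_zero]
  intro hμU
  -- The points whose orbit never enters `U` have full measure, so their forward images,
  -- which all miss `U`, fill `[a, b]` up to small Lebesgue measure.
  set V := ⋃ n, f^[n] ⁻¹' U
  have hV : MeasurableSet V := .iUnion fun n => (hμ.iterate n).measurable hU.measurableSet
  have hμV : μ V = 0 := measure_iUnion_null fun n => by
    rw [(hμ.iterate n).measure_preimage hU.measurableSet.nullMeasurableSet, hμU]
  have hμ_diff : μ (Icc a b \ V) ≠ 0 := by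
    rw [measure_sdiff_null hμV, (prob_compl_eq_zero_iff measurableSet_Icc).1 hμ_Icc]
    exact one_ne_zero
  have hvol : volume (U ∩ Ioo a b) ≠ 0 := by
    refine ((hU.inter isOpen_Ioo).measure_pos volume ?_).ne'
    rwa [inter_comm, ← closure_inter_open_nonempty_iff hU, closure_Ioo hab.ne, inter_comm]
  obtain ⟨ε, hε, hε_lt⟩ := exists_between (pos_iff_ne_zero.2 hvol)
  obtain ⟨n, hn⟩ := hf.exists_volume_Icc_diff_image_le hlip hleo hab hmaps hμ hμC sdiff_subset
    (measurableSet_Icc.diff hV) hμ_diff hε.ne'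
  refine hε_lt.not_ge (le_trans (measure_mono ?_) hn)
  rintro x ⟨hxU, hx⟩
  refine ⟨Ioo_subset_Icc_self hx, ?_⟩
  rintro ⟨y, hy, rfl⟩
  exact hy.2 (mem_iUnion.2 ⟨n, hxU⟩)

end ExpandingPiecewiseAffine

/-- `W` is the piecewise affine map whose graph on `[0, 1]` is the W-shaped polygonal line through
`(0, 1)`, `(b₁, 0)`, `(m, h)`, `(b₂, 0)` and `(1, 1)`, with the two outer pieces extended to all
of `ℝ`. Both inner slopes exceed `1`, and either the peak `m` is fixed or the reciprocals
`(m - b₁) / h` and `(b₂ - m) / h` of the inner slopes have sum less than `1`. -/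
structure IsWShaped (W : ℝ → ℝ) (b₁ m b₂ h : ℝ) : Prop where
  b₁_pos : 0 < b₁
  b₁_lt : b₁ < m
  lt_b₂ : m < b₂
  b₂_lt : b₂ < 1
  left_lt : m - b₁ < h
  right_lt : b₂ - m < h
  le_one : h ≤ 1
  peak : h = m ∨ b₂ - b₁ < h
  eq_of_le_b₁ : ∀ x ≤ b₁, W x = (b₁ - x) / b₁
  eq_of_b₁_le : ∀ x, b₁ ≤ x → x ≤ m → W x = h * (x - b₁) / (m - b₁)
  eq_of_le_b₂ : ∀ x, m ≤ x → x ≤ b₂ → W x = h * (b₂ - x) / (b₂ - m)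
  eq_of_b₂_le : ∀ x, b₂ ≤ x → W x = (x - b₂) / (1 - b₂)

namespace IsWShaped

open Set Function
open scoped NNReal

variable {W : ℝ → ℝ} {b₁ m b₂ h u v : ℝ} {g : ℝ → ℝ}

lemma map_zero (hW : IsWShaped W b₁ m b₂ h) : W 0 = 1 := by
  rw [hW.eq_of_le_b₁ 0 hW.b₁_pos.le, sub_zero, div_self hW.b₁_pos.ne']

lemma map_b₁ (hW : IsWShaped W b₁ m b₂ h) : W b₁ = 0 := by
  rw [hW.eq_of_le_b₁ b₁ le_rfl, sub_self, zero_div]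

lemma map_peak (hW : IsWShaped W b₁ m b₂ h) : W m = h := by
  rw [hW.eq_of_b₁_le m hW.b₁_lt.le le_rfl, mul_div_cancel_right₀ _ (sub_pos.2 hW.b₁_lt).ne']

lemma map_b₂ (hW : IsWShaped W b₁ m b₂ h) : W b₂ = 0 := by
  rw [hW.eq_of_b₂_le b₂ le_rfl, sub_self, zero_div]

lemma map_one (hW : IsWShaped W b₁ m b₂ h) : W 1 = 1 := by
  rw [hW.eq_of_b₂_le 1 hW.b₂_lt.le, div_self (sub_pos.2 hW.b₂_lt).ne']

lemma h_pos (hW : IsWShaped W b₁ m b₂ h) : 0 < h :=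
  (sub_pos.2 hW.b₁_lt).trans hW.left_lt

/-- The reciprocal of the slope of a W-shaped map on the branch containing `x`; at a breakpoint it
is taken from the branch to the left. -/
noncomputable def invSlope (b₁ m b₂ h x : ℝ) : ℝ :=
  if x ≤ b₁ then -b₁
  else if x ≤ m then (m - b₁) / h
  else if x ≤ b₂ then -((b₂ - m) / h)
  else 1 - b₂

lemma invSlope_ne_zero (hW : IsWShaped W b₁ m b₂ h) (x : ℝ) : invSlope b₁ m b₂ h x ≠ 0 := by
  have := hW.b₁_pos
  have := hW.h_pos
  have := sub_pos.2 hW.b₁_lt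
  have := sub_pos.2 hW.lt_b₂
  have := sub_pos.2 hW.b₂_lt
  unfold invSlope
  split_ifs <;> simp only [ne_eq, neg_eq_zero] <;> positivity

lemma exists_abs_invSlope_le (hW : IsWShaped W b₁ m b₂ h) :
    ∃ θ, 0 < θ ∧ θ < 1 ∧ ∀ x, |invSlope b₁ m b₂ h x| ≤ θ := by
  obtain ⟨hb₁, hb₁m, hmb₂, hb₂, hleft, hright, -⟩ := hW
  have hh : 0 < h := (sub_pos.2 hb₁m).trans hleft
  have hleft' : 0 ≤ (m - b₁) / h := div_nonneg (sub_nonneg.2 hb₁m.le) hh.le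
  have hright' : 0 ≤ (b₂ - m) / h := div_nonneg (sub_nonneg.2 hmb₂.le) hh.le
  refine ⟨max (max b₁ (1 - b₂)) (max ((m - b₁) / h) ((b₂ - m) / h)), ?_, ?_, fun x => ?_⟩
  · exact hb₁.trans_le ((le_max_left _ _).trans (le_max_left _ _))
  · refine max_lt (max_lt ?_ ?_) (max_lt ((div_lt_one hh).2 hleft) ((div_lt_one hh).2 hright))
    all_goals linarith
  · unfold invSlope
    split_ifs
    · simp [abs_of_pos hb₁]
    · simp [abs_of_nonneg hleft']
    · simp [abs_of_nonneg hright']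
    · simp [abs_of_pos (sub_pos.2 hb₂)]

lemma eq_add_inv_invSlope_mul (hW : IsWShaped W b₁ m b₂ h) {u v : ℝ}
    (hdisj : Disjoint (Ioo u v) {b₁, m, b₂}) {x y : ℝ} (hx : x ∈ Icc u v) (hy : y ∈ Icc u v) :
    W y = W x + (invSlope b₁ m b₂ h v)⁻¹ * (y - x) := by
  have hb₁ := hW.b₁_pos
  have hleft := sub_pos.2 hW.b₁_lt
  have hright := sub_pos.2 hW.lt_b₂
  have hb₂ := sub_pos.2 hW.b₂_lt
  have hh := hW.h_pos
  have avoid {c : ℝ} (hc : c ∈ ({b₁, m, b₂} : Set ℝ)) (hcv : c < v) : c ≤ u := by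
    by_contra! huc
    exact Set.disjoint_left.1 hdisj ⟨huc, hcv⟩ hc
  unfold invSlope
  split_ifs with hv₁ hv₂ hv₃
  · rw [hW.eq_of_le_b₁ y (hy.2.trans hv₁), hW.eq_of_le_b₁ x (hx.2.trans hv₁)]
    field_simp
    ring
  · have hu := avoid (by simp) (not_le.1 hv₁)
    rw [hW.eq_of_b₁_le y (hu.trans hy.1) (hy.2.trans hv₂),
      hW.eq_of_b₁_le x (hu.trans hx.1) (hx.2.trans hv₂)]
    field_simp
    ring
  · have hu := avoid (by simp) (not_le.1 hv₂)
    rw [hW.eq_of_le_b₂ y (hu.trans hy.1) (hy.2.trans hv₃),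
      hW.eq_of_le_b₂ x (hu.trans hx.1) (hx.2.trans hv₃)]
    field_simp
    ring
  · have hu := avoid (by simp) (not_le.1 hv₃)
    rw [hW.eq_of_b₂_le y (hu.trans hy.1), hW.eq_of_b₂_le x (hu.trans hx.1)]
    field_simp
    ring

theorem exists_isExpandingPiecewiseAffine (hW : IsWShaped W b₁ m b₂ h) :
    ∃ l, IsExpandingPiecewiseAffine W {b₁, m, b₂} l := by
  obtain ⟨θ, hθ0, hθ1, hθ⟩ := hW.exists_abs_invSlope_le
  refine ⟨θ⁻¹, (one_lt_inv₀ hθ0).2 hθ1, fun u v hdisj => ⟨(invSlope b₁ m b₂ h v)⁻¹, ?_, ?_⟩⟩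
  · rw [abs_inv]
    exact inv_anti₀ (abs_pos.2 (hW.invSlope_ne_zero v)) (hθ v)
  · exact fun x hx y hy => hW.eq_add_inv_invSlope_mul (by simpa using hdisj) hx hy

lemma eq_max_min (hW : IsWShaped W b₁ m b₂ h) (x : ℝ) :
    W x = max (max ((b₁ - x) / b₁) ((x - b₂) / (1 - b₂)))
      (min (h * (x - b₁) / (m - b₁)) (h * (b₂ - x) / (b₂ - m))) := by
  have hb₁ := hW.b₁_pos
  have hb₁m := hW.b₁_lt
  have hmb₂ := hW.lt_b₂
  have hh := hW.h_pos
  have hleft : 0 < m - b₁ := sub_pos.2 hb₁m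
  have hright : 0 < b₂ - m := sub_pos.2 hmb₂
  have hb₂ : 0 < 1 - b₂ := sub_pos.2 hW.b₂_lt
  obtain hx₁ | hx₁ := le_total x b₁
  · have hA : 0 ≤ (b₁ - x) / b₁ := div_nonneg (by linarith) hb₁.le
    have hB : h * (x - b₁) / (m - b₁) ≤ 0 :=
      div_nonpos_of_nonpos_of_nonneg (mul_nonpos_of_nonneg_of_nonpos hh.le (by linarith)) hleft.le
    have hD : (x - b₂) / (1 - b₂) ≤ 0 := div_nonpos_of_nonpos_of_nonneg (by linarith) hb₂.le
    rw [hW.eq_of_le_b₁ x hx₁, max_eq_left (hD.trans hA),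
      max_eq_left ((min_le_left _ _).trans (hB.trans hA))]
  have hA : (b₁ - x) / b₁ ≤ 0 := div_nonpos_of_nonpos_of_nonneg (by linarith) hb₁.le
  obtain hx₂ | hx₂ := le_total b₂ x
  · have hC : h * (b₂ - x) / (b₂ - m) ≤ 0 :=
      div_nonpos_of_nonpos_of_nonneg (mul_nonpos_of_nonneg_of_nonpos hh.le (by linarith)) hright.le
    have hD : 0 ≤ (x - b₂) / (1 - b₂) := div_nonneg (by linarith) hb₂.le
    rw [hW.eq_of_b₂_le x hx₂, max_eq_right (hA.trans hD),
      max_eq_left ((min_le_right _ _).trans (hC.trans hD))]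
  have hD : (x - b₂) / (1 - b₂) ≤ 0 := div_nonpos_of_nonpos_of_nonneg (by linarith) hb₂.le
  have hB : 0 ≤ h * (x - b₁) / (m - b₁) := div_nonneg (mul_nonneg hh.le (by linarith)) hleft.le
  have hC : 0 ≤ h * (b₂ - x) / (b₂ - m) := div_nonneg (mul_nonneg hh.le (by linarith)) hright.le
  rw [max_eq_right ((max_le hA hD).trans (le_min hB hC))]
  obtain hxm | hxm := le_total x m
  · rw [hW.eq_of_b₁_le x hx₁ hxm, min_eq_left]
    rw [div_le_div_iff₀ hleft hright]
    nlinarith [mul_nonneg hh.le (sub_nonneg.2 hxm)]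
  · rw [hW.eq_of_le_b₂ x hxm hx₂, min_eq_right]
    rw [div_le_div_iff₀ hright hleft]
    nlinarith [mul_nonneg hh.le (sub_nonneg.2 hxm)]

theorem exists_lipschitzWith (hW : IsWShaped W b₁ m b₂ h) : ∃ K, LipschitzWith K W := by
  have lipschitz_affine (F : ℝ → ℝ) (s : ℝ) (hF : ∀ x y, F x - F y = s * (x - y)) :
      LipschitzWith ‖s‖₊ F :=
    .of_dist_le_mul fun x y => by
      rw [Real.dist_eq, hF, abs_mul, Real.dist_eq, coe_nnnorm, Real.norm_eq_abs]
  have hlip := ((lipschitz_affine (fun x => (b₁ - x) / b₁) (-b₁⁻¹) fun x y => by ring).max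
    (lipschitz_affine (fun x => (x - b₂) / (1 - b₂)) (1 - b₂)⁻¹ fun x y => by ring)).max
    ((lipschitz_affine (fun x => h * (x - b₁) / (m - b₁)) (h / (m - b₁)) fun x y => by ring).min
    (lipschitz_affine (fun x => h * (b₂ - x) / (b₂ - m)) (-(h / (b₂ - m))) fun x y => by ring))
  exact ⟨_, funext hW.eq_max_min ▸ hlip⟩

lemma continuous (hW : IsWShaped W b₁ m b₂ h) : Continuous W :=
  hW.exists_lipschitzWith.choose_spec.continuous

lemma mapsTo_Icc (hW : IsWShaped W b₁ m b₂ h) : MapsTo W (Icc 0 1) (Icc 0 1) := by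
  intro x hx
  have hleft : 0 < m - b₁ := sub_pos.2 hW.b₁_lt
  have hright : 0 < b₂ - m := sub_pos.2 hW.lt_b₂
  have hb₂ : 0 < 1 - b₂ := sub_pos.2 hW.b₂_lt
  have hh := hW.h_pos
  have hh1 := hW.le_one
  obtain hx₁ | hx₁ := le_total x b₁
  · rw [hW.eq_of_le_b₁ x hx₁, mem_Icc, le_div_iff₀ hW.b₁_pos, div_le_iff₀ hW.b₁_pos]
    constructor <;> linarith [hx.1]
  obtain hxm | hxm := le_total x m
  · rw [hW.eq_of_b₁_le x hx₁ hxm, mem_Icc, le_div_iff₀ hleft, div_le_iff₀ hleft]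
    constructor <;> nlinarith
  obtain hx₂ | hx₂ := le_total x b₂
  · rw [hW.eq_of_le_b₂ x hxm hx₂, mem_Icc, le_div_iff₀ hright, div_le_iff₀ hright]
    constructor <;> nlinarith
  · rw [hW.eq_of_b₂_le x hx₂, mem_Icc, le_div_iff₀ hb₂, div_le_iff₀ hb₂]
    constructor <;> linarith [hx.2]

lemma map_pos (hW : IsWShaped W b₁ m b₂ h) {x : ℝ} (hx₁ : x ≠ b₁) (hx₂ : x ≠ b₂) : 0 < W x := by
  have hh := hW.h_pos
  obtain hlt₁ | hlt₁ := hx₁.lt_or_gt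
  · rw [hW.eq_of_le_b₁ x hlt₁.le]
    exact div_pos (sub_pos.2 hlt₁) hW.b₁_pos
  obtain hlt₂ | hlt₂ := hx₂.lt_or_gt
  · obtain hxm | hxm := le_total x m
    · rw [hW.eq_of_b₁_le x hlt₁.le hxm]
      exact div_pos (mul_pos hh (sub_pos.2 hlt₁)) (sub_pos.2 hW.b₁_lt)
    · rw [hW.eq_of_le_b₂ x hxm hlt₂.le]
      exact div_pos (mul_pos hh (sub_pos.2 hlt₂)) (sub_pos.2 hW.lt_b₂)
  · rw [hW.eq_of_b₂_le x hlt₂.le]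
    exact div_pos (sub_pos.2 hlt₂) (sub_pos.2 hW.b₂_lt)

lemma eventuallyCovers_Icc_one (hW : IsWShaped W b₁ m b₂ h) (hu : u < 1) :
    EventuallyCovers W (Icc u 1) (Icc 0 1) := by
  have hb₂ : 0 < 1 - b₂ := sub_pos.2 hW.b₂_lt
  refine eventuallyCovers_Icc_of_repelling_fixedPoint (d := b₂) (σ := (1 - b₂)⁻¹) hW.continuous
    ?_ hW.map_one (fun x hx => ?_) (fun u hu => ⟨1, ?_⟩) hu
  · exact (one_lt_inv₀ hb₂).2 (by linarith [hW.b₁_pos, hW.b₁_lt, hW.lt_b₂])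
  · rw [hW.eq_of_b₂_le x hx.1]
    field_simp
    ring
  · simpa [hW.map_b₂, hW.map_one] using Icc_subset_image_Icc hW.continuous.continuousOn
      (⟨hu, hW.b₂_lt.le⟩ : b₂ ∈ Icc u 1) (right_mem_Icc.2 (hu.trans hW.b₂_lt.le))

lemma eventuallyCovers_Icc_zero (hW : IsWShaped W b₁ m b₂ h) (hv : 0 < v) :
    EventuallyCovers W (Icc 0 v) (Icc 0 1) := by
  have hw : 0 < min v b₁ := lt_min hv hW.b₁_pos
  have hlt : W (min v b₁) < 1 := by
    rw [hW.eq_of_le_b₁ _ (min_le_right _ _), div_lt_one hW.b₁_pos]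
    linarith
  refine (hW.eventuallyCovers_Icc_one hlt).of_subset_image ?_
  rw [← hW.map_zero]
  exact Icc_subset_image_Icc hW.continuous.continuousOn ⟨hw.le, min_le_left _ _⟩
    (left_mem_Icc.2 hv.le)

lemma eventuallyCovers_of_map_eq_zero (hW : IsWShaped W b₁ m b₂ h) (huv : u < v) {x : ℝ}
    (hx : x ∈ Icc u v) (hWx : W x = 0) : EventuallyCovers W (Icc u v) (Icc 0 1) := by
  obtain ⟨y, hy, hy_notMem⟩ := (Icc_infinite huv).exists_notMem_finset {b₁, b₂}
  simp only [Finset.mem_insert, Finset.mem_singleton, not_or] at hy_notMem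
  refine (hW.eventuallyCovers_Icc_zero (hW.map_pos hy_notMem.1 hy_notMem.2)).of_subset_image ?_
  rw [← hWx]
  exact Icc_subset_image_Icc hW.continuous.continuousOn hx hy

lemma eventuallyCovers_Icc_peak (hW : IsWShaped W b₁ m b₂ h) (hhm : h = m) (hu : u < m) :
    EventuallyCovers W (Icc u m) (Icc 0 1) := by
  have hleft : 0 < m - b₁ := sub_pos.2 hW.b₁_lt
  refine eventuallyCovers_Icc_of_repelling_fixedPoint (d := b₁) (σ := m / (m - b₁)) hW.continuous
    ?_ (hW.map_peak.trans hhm) (fun x hx => ?_) (fun u hu => ?_) hu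
  · exact (one_lt_div hleft).2 (hhm ▸ hW.left_lt)
  · rw [hW.eq_of_b₁_le x hx.1 hx.2, hhm]
    field_simp
    ring
  · exact hW.eventuallyCovers_of_map_eq_zero (hu.trans_lt hW.b₁_lt) ⟨hu, hW.b₁_lt.le⟩ hW.map_b₁

-- `h * (v - u) / (b₂ - b₁)` is the mediant of the drops `h * (m - u) / (m - b₁)` and
-- `h * (v - m) / (b₂ - m)` to the two sides of the peak, so one of them is at least as large.
lemma exists_le_peak_sub (hW : IsWShaped W b₁ m b₂ h) (hu : b₁ ≤ u) (hv : v ≤ b₂)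
    (hm : m ∈ Ioo u v) : ∃ x ∈ Icc u v, h / (b₂ - b₁) * (v - u) ≤ h - W x := by
  have hh := hW.h_pos
  have hleft : 0 < m - b₁ := sub_pos.2 hW.b₁_lt
  have hright : 0 < b₂ - m := sub_pos.2 hW.lt_b₂
  have hwidth : 0 < b₂ - b₁ := by linarith
  have hWu := hW.eq_of_b₁_le u hu hm.1.le
  have hWv := hW.eq_of_le_b₂ v hm.2.le hv
  obtain hside | hside := le_total ((v - m) * (m - b₁)) ((m - u) * (b₂ - m))
  · refine ⟨u, left_mem_Icc.2 (hm.1.trans hm.2).le, ?_⟩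
    have hdrop : h - W u = h * (m - u) / (m - b₁) := by
      rw [hWu]
      field_simp
      ring
    rw [hdrop, div_mul_eq_mul_div, div_le_div_iff₀ hwidth hleft]
    nlinarith
  · refine ⟨v, right_mem_Icc.2 (hm.1.trans hm.2).le, ?_⟩
    have hdrop : h - W v = h * (v - m) / (b₂ - m) := by
      rw [hWv]
      field_simp
      ring
    rw [hdrop, div_mul_eq_mul_div, div_le_div_iff₀ hwidth hright]
    nlinarith

lemma exists_growth_at_peak (hW : IsWShaped W b₁ m b₂ h) :
    ∃ θ > 1, ∀ u v, b₁ ≤ u → v ≤ b₂ → m ∈ Ioo u v →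
      EventuallyCovers W (Icc u v) (Icc 0 1) ∨
        ∃ x ∈ Icc u v, ∃ y ∈ Icc u v, θ * (v - u) ≤ W y - W x := by
  have hwidth : 0 < b₂ - b₁ := sub_pos.2 (hW.b₁_lt.trans hW.lt_b₂)
  obtain hhm | hlt := hW.peak
  · refine ⟨2, one_lt_two, fun u v hu hv hm => .inl ?_⟩
    obtain ⟨x, hx, hdrop⟩ := hW.exists_le_peak_sub hu hv hm
    have hpos : 0 < h / (b₂ - b₁) * (v - u) :=
      mul_pos (div_pos hW.h_pos hwidth) (sub_pos.2 (hm.1.trans hm.2))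
    refine (hW.eventuallyCovers_Icc_peak hhm (by linarith : W x < m)).of_subset_image ?_
    simpa [hW.map_peak, hhm] using
      Icc_subset_image_Icc hW.continuous.continuousOn hx (Ioo_subset_Icc_self hm)
  · refine ⟨h / (b₂ - b₁), (one_lt_div hwidth).2 hlt, fun u v hu hv hm => .inr ?_⟩
    obtain ⟨x, hx, hdrop⟩ := hW.exists_le_peak_sub hu hv hm
    exact ⟨x, hx, m, Ioo_subset_Icc_self hm, by rwa [hW.map_peak]⟩

theorem locallyEventuallyOnto (hW : IsWShaped W b₁ m b₂ h) : LocallyEventuallyOnto W 0 1 := by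
  obtain ⟨l, hl⟩ := hW.exists_isExpandingPiecewiseAffine
  obtain ⟨θ, hθ, hpeak⟩ := hW.exists_growth_at_peak
  refine locallyEventuallyOnto_of_growth hW.continuous hW.mapsTo_Icc (lt_min hl.one_lt hθ)
    fun u v _ huv _ => ?_
  by_cases hb₁ : b₁ ∈ Icc u v
  · exact .inl (hW.eventuallyCovers_of_map_eq_zero huv hb₁ hW.map_b₁)
  by_cases hb₂ : b₂ ∈ Icc u v
  · exact .inl (hW.eventuallyCovers_of_map_eq_zero huv hb₂ hW.map_b₂)
  have weaken {k : ℝ} (hk : min l θ ≤ k)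
      (hgrow : ∃ x ∈ Icc u v, ∃ y ∈ Icc u v, k * (v - u) ≤ W y - W x) :
      ∃ x ∈ Icc u v, ∃ y ∈ Icc u v, min l θ * (v - u) ≤ W y - W x := by
    obtain ⟨x, hx, y, hy, hxy⟩ := hgrow
    exact ⟨x, hx, y, hy, (mul_le_mul_of_nonneg_right hk (sub_nonneg.2 huv.le)).trans hxy⟩
  by_cases hm : m ∈ Ioo u v
  · have hu : b₁ ≤ u := by
      by_contra! hub₁
      exact hb₁ ⟨hub₁.le, (hW.b₁_lt.trans hm.2).le⟩
    have hv : v ≤ b₂ := by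
      by_contra! hb₂v
      exact hb₂ ⟨(hm.1.trans hW.lt_b₂).le, hb₂v.le⟩
    exact (hpeak u v hu hv hm).imp_right (weaken (min_le_right _ _))
  · refine .inr (weaken (min_le_left _ _) (hl.exists_le_sub ?_ huv.le))
    rw [Set.disjoint_right]
    intro x hx hxuv
    simp only [Finset.coe_insert, Finset.coe_singleton, mem_insert_iff, mem_singleton_iff] at hx
    obtain rfl | rfl | rfl := hx
    exacts [hb₁ (Ioo_subset_Icc_self hxuv), hm hxuv, hb₂ (Ioo_subset_Icc_self hxuv)]

lemma integral_comp_of_disjoint (hW : IsWShaped W b₁ m b₂ h) {u v : ℝ} (huv : u ≤ v)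
    (hdisj : Disjoint (Ioo u v) {b₁, m, b₂}) (g : ℝ → ℝ) :
    ∫ x in u..v, g (W x) = invSlope b₁ m b₂ h v * ∫ y in W u..W v, g y := by
  set s := (invSlope b₁ m b₂ h v)⁻¹
  have hs : s ≠ 0 := inv_ne_zero (hW.invSlope_ne_zero v)
  have haffine (x : ℝ) (hx : x ∈ Icc u v) : W x = W u - s * u + s * x := by
    rw [hW.eq_add_inv_invSlope_mul hdisj (left_mem_Icc.2 huv) hx]
    ring
  calc ∫ x in u..v, g (W x) = ∫ x in u..v, g (W u - s * u + s * x) := by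
        refine intervalIntegral.integral_congr fun x hx => ?_
        rw [uIcc_of_le huv] at hx
        simp only [haffine x hx]
    _ = invSlope b₁ m b₂ h v * ∫ y in W u..W v, g y := by
        rw [intervalIntegral.integral_comp_add_mul g hs, ← haffine u (left_mem_Icc.2 huv),
          ← haffine v (right_mem_Icc.2 huv), inv_inv, smul_eq_mul]

lemma integral_comp_eq_add (hW : IsWShaped W b₁ m b₂ h) (hg : Measurable g)
    (hg1 : ∀ x, |g x| ≤ 1) {u v : ℝ} (huv : u ≤ v)
    (hdisj : ∀ d ∈ ({b₁, m, b₂} : Set ℝ), d ≤ u ∨ v ≤ d) :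
    ∫ x in 0..v, g (W x) = (∫ x in 0..u, g (W x)) + invSlope b₁ m b₂ h v *
      ((∫ y in 0..W v, g y) - ∫ y in 0..W u, g y) := by
  have hint := intervalIntegrable_of_abs_le_one hg hg1
  have hint_comp : ∀ u v, IntervalIntegrable (fun x => g (W x)) volume u v :=
    intervalIntegrable_of_abs_le_one (hg.comp hW.continuous.measurable) fun x => hg1 (W x)
  rw [← intervalIntegral.integral_add_adjacent_intervals (hint_comp 0 u) (hint_comp u v),
    intervalIntegral.integral_interval_sub_left (hint 0 (W v)) (hint 0 (W u)),
    hW.integral_comp_of_disjoint huv _ g]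
  exact Set.disjoint_right.2 fun d hd hduv => (hdisj d hd).elim hduv.1.not_ge hduv.2.not_ge

/-- The coefficient of the peak term in the integral of `g ∘ W` over `[0, c]`, for `W` a W-shaped
map: the reciprocal slopes `(m - b₁) / h` and `(b₂ - m) / h` both count once `c` has passed `m`. -/
noncomputable def peakCoeff (b₁ m b₂ h c : ℝ) : ℝ :=
  if c ≤ m then 0 else (b₂ - b₁) / h

lemma integral_comp_b₁ (hW : IsWShaped W b₁ m b₂ h) (hg : Measurable g) (hg1 : ∀ x, |g x| ≤ 1) :
    ∫ x in 0..b₁, g (W x) = b₁ * ∫ y in 0..1, g y := by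
  have hγ : invSlope b₁ m b₂ h b₁ = -b₁ := if_pos le_rfl
  rw [hW.integral_comp_eq_add hg hg1 hW.b₁_pos.le
    (by simp [hW.b₁_lt.le, (hW.b₁_lt.trans hW.lt_b₂).le]), hγ, hW.map_zero, hW.map_b₁,
    intervalIntegral.integral_same, intervalIntegral.integral_same]
  ring

lemma integral_comp_peak (hW : IsWShaped W b₁ m b₂ h) (hg : Measurable g)
    (hg1 : ∀ x, |g x| ≤ 1) :
    ∫ x in 0..m, g (W x) = b₁ * (∫ y in 0..1, g y) + (m - b₁) / h * ∫ y in 0..h, g y := by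
  have hγ : invSlope b₁ m b₂ h m = (m - b₁) / h := by simp [invSlope, hW.b₁_lt]
  rw [hW.integral_comp_eq_add hg hg1 hW.b₁_lt.le (by simp [hW.lt_b₂.le]), hγ,
    hW.integral_comp_b₁ hg hg1, hW.map_b₁, hW.map_peak, intervalIntegral.integral_same, sub_zero]

lemma integral_comp_of_peak_lt (hW : IsWShaped W b₁ m b₂ h) (hg : Measurable g)
    (hg1 : ∀ x, |g x| ≤ 1) {c : ℝ} (hmc : m < c) (hcb₂ : c ≤ b₂) :
    ∫ x in 0..c, g (W x) = b₁ * (∫ y in 0..1, g y) + (b₂ - b₁) / h * (∫ y in 0..h, g y)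
      + invSlope b₁ m b₂ h c * ∫ y in 0..W c, g y := by
  have hγ : invSlope b₁ m b₂ h c = -((b₂ - m) / h) := by
    simp [invSlope, (hW.b₁_lt.trans hmc).not_ge, hmc.not_ge, hcb₂]
  rw [hW.integral_comp_eq_add hg hg1 hmc.le (by simp [hW.b₁_lt.le, hcb₂]), hγ,
    hW.integral_comp_peak hg hg1, hW.map_peak]
  ring

theorem integral_comp (hW : IsWShaped W b₁ m b₂ h) (hg : Measurable g) (hg1 : ∀ x, |g x| ≤ 1)
    {c : ℝ} (hc : 0 ≤ c) :
    ∫ x in 0..c, g (W x) = b₁ * (∫ y in 0..1, g y) + peakCoeff b₁ m b₂ h c * (∫ y in 0..h, g y)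
      + invSlope b₁ m b₂ h c * ∫ y in 0..W c, g y := by
  have hb₁m := hW.b₁_lt
  have hmb₂ := hW.lt_b₂
  obtain hcm | hmc := le_or_gt c m
  · have hpeak : peakCoeff b₁ m b₂ h c = 0 := if_pos hcm
    rw [hpeak, zero_mul, add_zero]
    obtain hcb₁ | hb₁c := le_or_gt c b₁
    · have hγ : invSlope b₁ m b₂ h c = -b₁ := if_pos hcb₁
      rw [hW.integral_comp_eq_add hg hg1 hc (by simp [hcb₁, hcm, hcm.trans hmb₂.le]), hγ,
        hW.map_zero, intervalIntegral.integral_same]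
      ring
    · rw [hW.integral_comp_eq_add hg hg1 hb₁c.le (by simp [hcm, hcm.trans hmb₂.le]),
        hW.integral_comp_b₁ hg hg1, hW.map_b₁, intervalIntegral.integral_same, sub_zero]
  · have hpeak : peakCoeff b₁ m b₂ h c = (b₂ - b₁) / h := if_neg hmc.not_ge
    rw [hpeak]
    obtain hcb₂ | hb₂c := le_or_gt c b₂
    · exact hW.integral_comp_of_peak_lt hg hg1 hmc hcb₂
    · rw [hW.integral_comp_eq_add hg hg1 hb₂c.le (by simp [(hb₁m.trans hmb₂).le, hmb₂.le]),
        hW.integral_comp_of_peak_lt hg hg1 hmb₂ le_rfl, hW.map_b₂, intervalIntegral.integral_same,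
        mul_zero, sub_zero, add_zero]

/-- The product of the reciprocal slopes of a W-shaped map along the first `n` points of the orbit
of its peak value `h`. -/
noncomputable def peakWeight (W : ℝ → ℝ) (b₁ m b₂ h : ℝ) (n : ℕ) : ℝ :=
  orbitWeight W (invSlope b₁ m b₂ h) h n

/-- The signed invariant density of a W-shaped map, whose jumps lie on the orbit of the peak value
`h`. The constant term is the one that makes the transfer operator fix it. -/
noncomputable def peakDensity (W : ℝ → ℝ) (b₁ m b₂ h x : ℝ) : ℝ :=
  b₁ * (∑' n, peakWeight W b₁ m b₂ h n) / (b₂ - b₁) +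
    stepSeries (peakWeight W b₁ m b₂ h) (fun n => W^[n] h) x

lemma summable_abs_peakWeight (hW : IsWShaped W b₁ m b₂ h) :
    Summable fun n => |peakWeight W b₁ m b₂ h n| := by
  obtain ⟨θ, -, hθ, hγ⟩ := hW.exists_abs_invSlope_le
  exact summable_abs_orbitWeight hθ hγ

lemma iterate_peak_mem_Icc (hW : IsWShaped W b₁ m b₂ h) (n : ℕ) : W^[n] h ∈ Icc 0 1 :=
  hW.mapsTo_Icc.iterate n ⟨hW.h_pos.le, hW.le_one⟩

lemma summable_peakWeight_mul_peakCoeff (hW : IsWShaped W b₁ m b₂ h) :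
    Summable fun n => peakWeight W b₁ m b₂ h n * peakCoeff b₁ m b₂ h (W^[n] h) := by
  refine .of_norm_bounded (hW.summable_abs_peakWeight.mul_right |(b₂ - b₁) / h|) fun n => ?_
  rw [norm_mul]
  refine mul_le_mul_of_nonneg_left ?_ (norm_nonneg _)
  unfold peakCoeff
  split_ifs
  · simp
  · exact le_rfl

-- The transfer formula moves the term of index `n` one step along the orbit of the peak, so the
-- series telescopes up to its initial term.
lemma hasSum_peakWeight_mul_integral_comp (hW : IsWShaped W b₁ m b₂ h) (hg : Measurable g)
    (hg1 : ∀ x, |g x| ≤ 1) {Φ : ℝ}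
    (hΦ : HasSum (fun n => peakWeight W b₁ m b₂ h n * ∫ y in 0..W^[n] h, g y) Φ) :
    HasSum (fun n => peakWeight W b₁ m b₂ h n * ∫ x in 0..W^[n] h, g (W x))
      ((∑' n, peakWeight W b₁ m b₂ h n) * (b₁ * ∫ y in 0..1, g y) +
        (∑' n, peakWeight W b₁ m b₂ h n * peakCoeff b₁ m b₂ h (W^[n] h)) * (∫ y in 0..h, g y) +
        (Φ - ∫ y in 0..h, g y)) := by
  have hshift : HasSum (fun n => peakWeight W b₁ m b₂ h (n + 1) * ∫ y in 0..W^[n + 1] h, g y)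
      (Φ - ∫ y in 0..h, g y) := by
    simpa [peakWeight, orbitWeight] using (hasSum_nat_add_iff' 1).2 hΦ
  refine (((hW.summable_abs_peakWeight.of_abs.hasSum.mul_right _).add
    (hW.summable_peakWeight_mul_peakCoeff.hasSum.mul_right _)).add hshift).congr_fun fun n => ?_
  rw [hW.integral_comp hg hg1 (hW.iterate_peak_mem_Icc n).1, iterate_succ_apply', peakWeight,
    peakWeight, orbitWeight_succ]
  ring

lemma tsum_peakWeight_normalization (hW : IsWShaped W b₁ m b₂ h) :
    b₁ * (∑' n, peakWeight W b₁ m b₂ h n) +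
      h * (∑' n, peakWeight W b₁ m b₂ h n * peakCoeff b₁ m b₂ h (W^[n] h)) = h := by
  have hsum := hasSum_integral_stepSeries_mul hW.summable_abs_peakWeight hW.iterate_peak_mem_Icc
    measurable_one (g := 1) (by simp)
  have := hsum.unique (hW.hasSum_peakWeight_mul_integral_comp measurable_one (by simp) hsum)
  simp only [Pi.one_apply, integral_one, sub_zero] at this
  linarith

lemma measurable_peakDensity (hW : IsWShaped W b₁ m b₂ h) :
    Measurable (peakDensity W b₁ m b₂ h) :=
  measurable_const.add (measurable_stepSeries hW.summable_abs_peakWeight)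

lemma exists_abs_peakDensity_le (hW : IsWShaped W b₁ m b₂ h) :
    ∃ M : ℝ≥0, ∀ x, |peakDensity W b₁ m b₂ h x| ≤ M := by
  refine ⟨Real.toNNReal (|b₁ * (∑' n, peakWeight W b₁ m b₂ h n) / (b₂ - b₁)| +
    ∑' n, |peakWeight W b₁ m b₂ h n|), fun x => ?_⟩
  refine le_trans ?_ (Real.le_coe_toNNReal _)
  exact (abs_add_le _ _).trans (by gcongr; exact abs_stepSeries_le hW.summable_abs_peakWeight x)

lemma integral_peakDensity_mul (hW : IsWShaped W b₁ m b₂ h) (hg : Measurable g)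
    (hg1 : ∀ x, |g x| ≤ 1) :
    ∫ x in Ioc 0 1, peakDensity W b₁ m b₂ h x * g x =
      b₁ * (∑' n, peakWeight W b₁ m b₂ h n) / (b₂ - b₁) * (∫ x in 0..1, g x) +
      ∑' n, peakWeight W b₁ m b₂ h n * ∫ x in 0..W^[n] h, g x := by
  have hw := hW.summable_abs_peakWeight
  have hg_int : IntegrableOn g (Ioc 0 1) :=
    (intervalIntegrable_of_abs_le_one hg hg1 0 1).1
  have hstep : IntegrableOn (fun x => stepSeries (peakWeight W b₁ m b₂ h) (fun n => W^[n] h) x *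
      g x) (Ioc 0 1) :=
    hg_int.bdd_mul (measurable_stepSeries hw).aestronglyMeasurable
      (Eventually.of_forall (abs_stepSeries_le hw))
  rw [(hasSum_integral_stepSeries_mul hw hW.iterate_peak_mem_Icc hg hg1).tsum_eq,
    intervalIntegral.integral_of_le zero_le_one, ← integral_const_mul,
    ← integral_add (hg_int.const_mul _) hstep]
  simp only [peakDensity, add_mul]

theorem isInvariantDensity_peakDensity (hW : IsWShaped W b₁ m b₂ h) :
    IsInvariantDensity W (volume.restrict (Ioc 0 1)) (peakDensity W b₁ m b₂ h) where
  measurable := hW.measurable_peakDensity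
  integrable := by
    obtain ⟨M, hM⟩ := hW.exists_abs_peakDensity_le
    exact .of_bound hW.measurable_peakDensity.aestronglyMeasurable M (Eventually.of_forall hM)
  integral_mul_comp g hg hg1 := by
    have hΦ := hasSum_integral_stepSeries_mul hW.summable_abs_peakWeight hW.iterate_peak_mem_Icc
      hg hg1
    have hpeak : peakCoeff b₁ m b₂ h 1 = (b₂ - b₁) / h :=
      if_neg (hW.lt_b₂.trans hW.b₂_lt).not_ge
    have hγ : invSlope b₁ m b₂ h 1 = 1 - b₂ := by
      simp [invSlope, (hW.b₁_lt.trans (hW.lt_b₂.trans hW.b₂_lt)).not_ge,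
        (hW.lt_b₂.trans hW.b₂_lt).not_ge, hW.b₂_lt.not_ge]
    rw [hW.integral_peakDensity_mul (g := fun x => g (W x)) (hg.comp hW.continuous.measurable)
      fun x => hg1 (W x), hW.integral_peakDensity_mul hg hg1, hΦ.tsum_eq,
      (hW.hasSum_peakWeight_mul_integral_comp hg hg1 hΦ).tsum_eq,
      hW.integral_comp hg hg1 zero_le_one, hpeak, hγ, hW.map_one]
    have hb : b₂ - b₁ ≠ 0 := (sub_pos.2 (hW.b₁_lt.trans hW.lt_b₂)).ne'
    have hh := hW.h_pos.ne'
    have hnorm : ∑' n, peakWeight W b₁ m b₂ h n * peakCoeff b₁ m b₂ h (W^[n] h) =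
        1 - b₁ * (∑' n, peakWeight W b₁ m b₂ h n) / h := by
      rw [eq_sub_iff_add_eq, ← mul_right_inj' hh, mul_add, mul_div_cancel₀ _ hh]
      linarith [hW.tsum_peakWeight_normalization]
    rw [hnorm]
    field_simp
    ring

lemma peakDensity_eq_of_peak_eq_one (hW : IsWShaped W b₁ m b₂ 1) {x : ℝ} (hx : x ≤ 1) :
    peakDensity W b₁ m b₂ 1 x = (∑' n, peakWeight W b₁ m b₂ 1 n) * (b₂ / (b₂ - b₁)) := by
  have hb : b₂ - b₁ ≠ 0 := (sub_pos.2 (hW.b₁_lt.trans hW.lt_b₂)).ne'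
  have hstep : stepSeries (peakWeight W b₁ m b₂ 1) (fun n => W^[n] 1) x =
      ∑' n, peakWeight W b₁ m b₂ 1 n := by
    simp [stepSeries, iterate_fixed hW.map_one, hx]
  rw [peakDensity, hstep]
  field_simp
  ring

lemma peakDensity_not_ae_eq_zero (hW : IsWShaped W b₁ m b₂ h) :
    ¬peakDensity W b₁ m b₂ h =ᵐ[volume.restrict (Ioc 0 1)] 0 := by
  intro hzero
  have hw := hW.summable_abs_peakWeight
  have hreturn := tsum_orbitWeight_return_ne_zero hw
  have hb : b₂ - b₁ ≠ 0 := (sub_pos.2 (hW.b₁_lt.trans hW.lt_b₂)).ne'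
  have hb₂ : b₂ ≠ 0 := (hW.b₁_pos.trans (hW.b₁_lt.trans hW.lt_b₂)).ne'
  obtain rfl | hh := hW.le_one.eq_or_lt
  · have : NeZero (volume.restrict (Ioc (0 : ℝ) 1)) := ⟨by simp⟩
    obtain ⟨x, hx0, hx⟩ := (hzero.and (ae_restrict_mem measurableSet_Ioc)).exists
    rw [hW.peakDensity_eq_of_peak_eq_one hx.2] at hx0
    refine mul_ne_zero ?_ (div_ne_zero hb₂ hb) hx0
    simpa [peakWeight, iterate_fixed hW.map_one] using hreturn
  · have hconst : ∀ᵐ x, x ∈ Ioo 0 1 → stepSeries (peakWeight W b₁ m b₂ h) (fun n => W^[n] h) x =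
        -(b₁ * (∑' n, peakWeight W b₁ m b₂ h n) / (b₂ - b₁)) := by
      filter_upwards [(ae_restrict_iff' measurableSet_Ioc).1 hzero] with x hx hx01
      exact eq_neg_of_add_eq_zero_right (hx (Ioo_subset_Ioc_self hx01))
    exact hreturn (tsum_jump_eq_zero_of_ae_eq_const hw ⟨hW.h_pos, hh⟩ hconst)

theorem exists_isProbabilityMeasure_measurePreserving (hW : IsWShaped W b₁ m b₂ h) :
    ∃ μ : Measure ℝ, IsProbabilityMeasure μ ∧ MeasurePreserving W μ μ ∧
      ∃ C : ℝ≥0, μ ≤ C • volume.restrict (Ioc 0 1) := by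
  obtain ⟨M, hM⟩ := hW.exists_abs_peakDensity_le
  exact hW.isInvariantDensity_peakDensity.exists_isProbabilityMeasure hW.continuous.measurable hM
    hW.peakDensity_not_ae_eq_zero

end IsWShaped

lemma isWShaped_of_slopes {σ₁ σ₂ h : ℝ} (hσ₁ : 2 * h < σ₁) (hσ₂ : 2 * h < σ₂) (hh : 1 / 2 ≤ h)
    (hh1 : h ≤ 1) (hpeak : h = 1 / 2 ∨ 1 / σ₁ + 1 / σ₂ < 1) :
    IsWShaped (fun x => if x < 1 / 2 - h / σ₁ then 1 - 2 * σ₁ / (σ₁ - 2 * h) * x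
      else if x < 1 / 2 then σ₁ * (x - 1 / 2) + h
      else if x < 1 / 2 + h / σ₂ then -σ₂ * (x - 1 / 2) + h
      else 1 + 2 * σ₂ / (σ₂ - 2 * h) * (x - 1))
      (1 / 2 - h / σ₁) (1 / 2) (1 / 2 + h / σ₂) h := by
  have hh0 : 0 < h := by linarith
  have hσ₁0 : 0 < σ₁ := by linarith
  have hσ₂0 : 0 < σ₂ := by linarith
  have hd₁ : 0 < σ₁ - 2 * h := sub_pos.2 hσ₁
  have hd₂ : 0 < σ₂ - 2 * h := sub_pos.2 hσ₂
  have hb₁ : 1 / 2 - h / σ₁ = (σ₁ - 2 * h) / (2 * σ₁) := by field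
  have hb₂ : 1 - (1 / 2 + h / σ₂) = (σ₂ - 2 * h) / (2 * σ₂) := by field
  have hb₁m : 1 / 2 - h / σ₁ < 1 / 2 := sub_lt_self _ (by positivity)
  have hmb₂ : 1 / 2 < 1 / 2 + h / σ₂ := lt_add_of_pos_right _ (by positivity)
  refine ⟨hb₁ ▸ by positivity, hb₁m, hmb₂, sub_pos.1 (hb₂ ▸ by positivity), ?_, ?_, hh1,
    hpeak.imp_right fun hsum => ?_, fun x hx => ?_, fun x hx hxm => ?_, fun x hmx hx => ?_,
    fun x hx => ?_⟩
  · rw [sub_sub_cancel]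
    exact div_lt_self hh0 (by linarith)
  · rw [add_sub_cancel_left]
    exact div_lt_self hh0 (by linarith)
  · calc 1 / 2 + h / σ₂ - (1 / 2 - h / σ₁) = h * (1 / σ₁ + 1 / σ₂) := by ring
      _ < h := mul_lt_of_lt_one_right hh0 hsum
  · obtain hx | rfl := hx.lt_or_eq
    · rw [if_pos hx, hb₁]
      field
    · rw [if_neg (lt_irrefl _), if_pos hb₁m]
      field
  · obtain hxm | rfl := hxm.lt_or_eq
    · rw [if_neg hx.not_gt, if_pos hxm]
      field
    · rw [if_neg hx.not_gt, if_neg (lt_irrefl _), if_pos hmb₂]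
      field
  · obtain hx | rfl := hx.lt_or_eq
    · rw [if_neg (hb₁m.trans_le hmx).not_gt, if_neg hmx.not_gt, if_pos hx]
      field
    · rw [if_neg (hb₁m.trans_le hmx).not_gt, if_neg hmx.not_gt, if_neg (lt_irrefl _)]
      field
  · rw [if_neg (hb₁m.trans (hmb₂.trans_le hx)).not_gt, if_neg (hmb₂.trans_le hx).not_gt,
      if_neg hx.not_gt, hb₂]
    field

lemma Wmap_half {s₁ s₂ p q r a : ℝ} (hb₁ : 0 ≤ (1 / 2 + r * a) / (s₁ + p * a))
    (hb₂ : 0 < (1 / 2 + r * a) / (s₂ + q * a)) : Wmap s₁ s₂ p q r a (1 / 2) = 1 / 2 + r * a := by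
  rw [Wmap, if_neg (sub_le_self _ hb₁).not_gt, if_neg (lt_irrefl _),
    if_pos (lt_add_of_pos_right _ hb₂)]
  ring

lemma isWShaped_Wmap {s₁ s₂ p q r a : ℝ} (hs₁ : 0 < s₁) (hs₂ : 0 < s₂) (hp : 0 < p) (hq : 0 < q)
    (hr : 0 < r) (hsum : 1 / s₁ + 1 / s₂ ≤ 1) (ha : 0 ≤ a)
    (hden₁ : 0 < s₁ - 1 + p * a - 2 * r * a) (hden₂ : 0 < s₂ - 1 + q * a - 2 * r * a)
    (hpeak_le : Wmap s₁ s₂ p q r a (1 / 2) ≤ 1) :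
    IsWShaped (Wmap s₁ s₂ p q r a) (1 / 2 - (1 / 2 + r * a) / (s₁ + p * a)) (1 / 2)
      (1 / 2 + (1 / 2 + r * a) / (s₂ + q * a)) (1 / 2 + r * a) := by
  have hh : 0 < 1 / 2 + r * a := by positivity
  rw [Wmap_half (by positivity) (by positivity)] at hpeak_le
  have hW : Wmap s₁ s₂ p q r a = fun x =>
      if x < 1 / 2 - (1 / 2 + r * a) / (s₁ + p * a) then
        1 - 2 * (s₁ + p * a) / (s₁ + p * a - 2 * (1 / 2 + r * a)) * x
      else if x < 1 / 2 then (s₁ + p * a) * (x - 1 / 2) + (1 / 2 + r * a)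
      else if x < 1 / 2 + (1 / 2 + r * a) / (s₂ + q * a) then
        -(s₂ + q * a) * (x - 1 / 2) + (1 / 2 + r * a)
      else 1 + 2 * (s₂ + q * a) / (s₂ + q * a - 2 * (1 / 2 + r * a)) * (x - 1) := by
    funext x
    unfold Wmap
    ring_nf
  rw [hW]
  refine isWShaped_of_slopes (by linarith) (by linarith) (by nlinarith) hpeak_le ?_
  obtain rfl | ha := ha.eq_or_lt
  · left
    ring
  · right
    calc 1 / (s₁ + p * a) + 1 / (s₂ + q * a) < 1 / s₁ + 1 / s₂ := by
          gcongr <;> exact lt_add_of_pos_right _ (by positivity)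
      _ ≤ 1 := hsum

theorem Wmap_acim_supported_and_exact_general {W : ℝ → ℝ} {b₁ m b₂ h : ℝ}
    (hW : IsWShaped W b₁ m b₂ h) :
    ∃ μ : Measure ℝ, IsProbabilityMeasure μ ∧ μ ≪ volume ∧
      μ (Set.Icc (0 : ℝ) 1)ᶜ = 0 ∧
      (∀ A : Set ℝ, MeasurableSet A → μ (W ⁻¹' A) = μ A) ∧
      (∀ U : Set ℝ, IsOpen U → (U ∩ Set.Icc (0 : ℝ) 1).Nonempty → 0 < μ U) ∧
      (∀ A : Set ℝ, A ⊆ Set.Icc (0 : ℝ) 1 → MeasurableSet A → 0 < μ A →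
        Tendsto (fun n => μ (W^[n] '' A)) atTop (𝓝 1)) := by
  obtain ⟨μ, hμ_prob, hμ, C, hμC⟩ := hW.exists_isProbabilityMeasure_measurePreserving
  obtain ⟨l, hl⟩ := hW.exists_isExpandingPiecewiseAffine
  obtain ⟨K, hK⟩ := hW.exists_lipschitzWith
  have hleo := hW.locallyEventuallyOnto
  have hμ_vol : μ ≤ C • volume :=
    hμC.trans fun E => mul_le_mul_right (Measure.restrict_le_self E) _
  have hμ_Icc : μ (Set.Icc 0 1)ᶜ = 0 := by
    refine Measure.absolutelyContinuous_of_le_smul hμC ?_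
    exact measure_mono_null (Set.compl_subset_compl.2 Set.Ioc_subset_Icc_self)
      (ae_restrict_mem measurableSet_Ioc)
  refine ⟨μ, hμ_prob, Measure.absolutelyContinuous_of_le_smul hμ_vol, hμ_Icc, fun A hA => ?_,
    fun U hU hU_Icc => ?_, fun A hA01 hA hμA => ?_⟩
  · exact hμ.measure_preimage hA.nullMeasurableSet
  · exact hl.measure_pos_of_isOpen hK hleo zero_lt_one hW.mapsTo_Icc hμ hμ_vol hμ_Icc hU hU_Icc
  · exact hl.tendsto_measure_image_iterate hK hleo zero_lt_one hW.mapsTo_Icc hμ hμ_vol hμ_Icc hA01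
      hA hμA.ne'

/-- Proposition: if `1/s₁ + 1/s₂ ≤ 1`, then for every admissible `a ≥ 0` the map `W_a` has
an absolutely continuous invariant probability measure `μ_a` supported on all of `[0,1]`,
and `W_a` is exact with respect to `μ_a`. -/
theorem Wmap_acim_supported_and_exact
    (s₁ s₂ p q r : ℝ) (hs₁ : 1 < s₁) (hs₂ : 1 < s₂)
    (hp : 0 < p) (hq : 0 < q) (hr : 0 < r)
    (hsum : 1/s₁ + 1/s₂ ≤ 1)
    (a : ℝ) (ha : 0 ≤ a)
    (hden₁ : 0 < s₁ - 1 + p*a - 2*r*a) (hden₂ : 0 < s₂ - 1 + q*a - 2*r*a)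
    (hadm : Set.MapsTo (Wmap s₁ s₂ p q r a) (Set.Icc 0 1) (Set.Icc 0 1)) :
    ∃ μ : Measure ℝ, IsProbabilityMeasure μ ∧ μ ≪ volume ∧
      μ (Set.Icc (0:ℝ) 1)ᶜ = 0 ∧
      (∀ A : Set ℝ, MeasurableSet A → μ (Wmap s₁ s₂ p q r a ⁻¹' A) = μ A) ∧
      (∀ U : Set ℝ, IsOpen U → (U ∩ Set.Icc (0:ℝ) 1).Nonempty → 0 < μ U) ∧
      (∀ A : Set ℝ, A ⊆ Set.Icc (0:ℝ) 1 → MeasurableSet A → 0 < μ A →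
        Tendsto (fun n => μ ((Wmap s₁ s₂ p q r a)^[n] '' A)) atTop (𝓝 1)) := by
  exact Wmap_acim_supported_and_exact_general (isWShaped_Wmap (by linarith) (by linarith) hp hq hr
    hsum ha hden₁ hden₂ (hadm (by norm_num)).2)
end

section
/- The piecewise constant function h_0 defined by h_0(x) = 2s₁(s₂+1)/(2s₁s₂+s₁−s₂) for 0 ≤ x < 1/2 and h_0(x) = 2s₂(s₁−1)/(2s₁s₂+s₁−s₂) for 1/2 ≤ x ≤ 1 is the normalized invariant density of W_0: the measure μ_0 with density h_0 with respect to Lebesgue measure on [0,1] is a probability measure and satisfies μ_0(W_0⁻¹(A)) = μ_0(A) for every Borel set A ⊆ [0,1]. -/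
open MeasureTheory Filter Topology

/-- The unperturbed map `W₀` with slopes `s₁` and `-s₂` at the turning fixed point `1/2`. -/
noncomputable def W0 (s₁ s₂ : ℝ) (x : ℝ) : ℝ :=
  if x < 1/2 - 1/(2*s₁) then
    1 - (2*s₁/(s₁-1)) * x
  else if x < 1/2 then
    s₁*(x - 1/2) + 1/2
  else if x < 1/2 + 1/(2*s₂) then
    -s₂*(x - 1/2) + 1/2
  else
    1 + (2*s₂/(s₂-1))*(x - 1)

/-- The invariant density of the unperturbed Markov map `W₀`. -/
noncomputable def h0 (s₁ s₂ : ℝ) (x : ℝ) : ℝ :=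
  if x < 1/2 then 2*s₁*(s₂+1)/(2*s₁*s₂+s₁-s₂) else 2*s₂*(s₁-1)/(2*s₁*s₂+s₁-s₂)

/-!
The map `W₀` consists of four affine branches; the outer ones cover `[0, 1]` and the inner ones
cover `[0, 1/2]`. Since an affine branch of slope `c` pushes Lebesgue measure forward to `|c|⁻¹`
times Lebesgue measure on its image, measures that are constant multiples of Lebesgue measure on
each of `[0, 1/2]` and `[1/2, 1]` are mapped to measures of the same kind. Invariance of the one
with densities `a` and `b` then amounts to the two linear equations `a / s₁ + b / s₂ + b = a` and
`a (s₁ - 1) / (2 s₁) + b (s₂ - 1) / (2 s₂) = b`, whose solution with `a + b = 2` is `h0`.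
-/

section Interval

variable {α : Type*} [LinearOrder α] [TopologicalSpace α] [OrderClosedTopology α]
  [MeasurableSpace α] [OpensMeasurableSpace α] (μ : Measure α) [NullSingletonClass μ] {p q r : α}

theorem restrict_Icc_add_restrict_Icc (hpq : p ≤ q) (hqr : q ≤ r) :
    μ.restrict (Set.Icc p q) + μ.restrict (Set.Icc q r) = μ.restrict (Set.Icc p r) := by
  simp only [← restrict_Ioc_eq_restrict_Icc]
  rw [← Set.Ioc_union_Ioc_eq_Ioc hpq hqr,
    Measure.restrict_union (Set.Ioc_disjoint_Ioc_of_le le_rfl) measurableSet_Ioc]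

theorem ae_eq_restrict_Icc_of_eqOn_Ioo {β : Type*} {f g : α → β}
    (h : Set.EqOn f g (Set.Ioo p q)) : f =ᵐ[μ.restrict (Set.Icc p q)] g := by
  rw [← restrict_Ioo_eq_restrict_Icc]
  exact ae_restrict_of_forall_mem measurableSet_Ioo h

theorem withDensity_restrict_Icc_of_eqOn_const {f : α → ENNReal} {a b : ENNReal}
    (hpq : p ≤ q) (hqr : q ≤ r) (ha : Set.EqOn f (fun _ => a) (Set.Ioo p q))
    (hb : Set.EqOn f (fun _ => b) (Set.Ioo q r)) :
    (μ.restrict (Set.Icc p r)).withDensity f =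
      a • μ.restrict (Set.Icc p q) + b • μ.restrict (Set.Icc q r) := by
  rw [← restrict_Icc_add_restrict_Icc μ hpq hqr, withDensity_add_measure,
    withDensity_congr_ae (ae_eq_restrict_Icc_of_eqOn_Ioo μ ha),
    withDensity_congr_ae (ae_eq_restrict_Icc_of_eqOn_Ioo μ hb),
    withDensity_const, withDensity_const]

end Interval

theorem map_volume_affine {c : ℝ} (hc : c ≠ 0) (d : ℝ) :
    (volume : Measure ℝ).map (fun x => c * x + d) = ENNReal.ofReal |c⁻¹| • volume := by
  have hcomp : (fun x : ℝ => c * x + d) = (· + d) ∘ (c * ·) := rfl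
  rw [hcomp, ← Measure.map_map (measurable_add_const d) (measurable_const_mul c),
    Real.map_volume_mul_left hc, Measure.map_smul, map_add_right_eq_self]

theorem preimage_affine_uIcc {K : Type*} [Field K] [LinearOrder K] [IsStrictOrderedRing K]
    {c : K} (hc : c ≠ 0) (d p q : K) :
    (fun x => c * x + d) ⁻¹' Set.uIcc (c * p + d) (c * q + d) = Set.uIcc p q := by
  have hcomp : (fun x : K => c * x + d) = (· + d) ∘ (c * ·) := rfl
  rw [hcomp, Set.preimage_comp, Set.preimage_add_const_uIcc, Set.preimage_const_mul_uIcc hc]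
  simp only [add_sub_cancel_right, mul_div_cancel_left₀ _ hc]

theorem map_restrict_Icc_of_eqOn_affine {W : ℝ → ℝ} {c d p q : ℝ} (hc : c ≠ 0)
    (hpq : p ≤ q) (hW : Set.EqOn W (fun x => c * x + d) (Set.Ioo p q)) :
    (volume.restrict (Set.Icc p q)).map W =
      ENNReal.ofReal |c⁻¹| • volume.restrict (Set.uIcc (c * p + d) (c * q + d)) := by
  rw [Measure.map_congr (ae_eq_restrict_Icc_of_eqOn_Ioo volume hW), ← Set.uIcc_of_le hpq,
    ← preimage_affine_uIcc hc d, ← Measure.restrict_map (by fun_prop) measurableSet_uIcc,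
    map_volume_affine hc, Measure.restrict_smul]

section Branches

variable {s₁ s₂ : ℝ}

theorem measurable_W0 (s₁ s₂ : ℝ) : Measurable (W0 s₁ s₂) :=
  .ite measurableSet_Iio (by fun_prop) <| .ite measurableSet_Iio (by fun_prop) <|
    .ite measurableSet_Iio (by fun_prop) (by fun_prop)

theorem one_div_two_mul_le_half {s : ℝ} (hs : 1 ≤ s) : 1 / (2 * s) ≤ 1 / 2 :=
  one_div_le_one_div_of_le two_pos (by linarith)

theorem map_W0_restrict_branch_one (hs₁ : 1 < s₁) :
    (volume.restrict (Set.Icc 0 (1 / 2 - 1 / (2 * s₁)))).map (W0 s₁ s₂) =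
      ENNReal.ofReal ((s₁ - 1) / (2 * s₁)) • volume.restrict (Set.Icc 0 1) := by
  have hs₁_sub : 0 < s₁ - 1 := sub_pos.2 hs₁
  have hslope : 0 < 2 * s₁ / (s₁ - 1) := by positivity
  have haffine : Set.EqOn (W0 s₁ s₂) (fun x => -(2 * s₁ / (s₁ - 1)) * x + 1)
      (Set.Ioo 0 (1 / 2 - 1 / (2 * s₁))) := by
    rintro x ⟨-, hx⟩
    rw [W0, if_pos hx]
    ring
  have hright : -(2 * s₁ / (s₁ - 1)) * (1 / 2 - 1 / (2 * s₁)) + 1 = 0 := by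
    field_simp
    ring
  rw [map_restrict_Icc_of_eqOn_affine (neg_ne_zero.2 hslope.ne')
    (sub_nonneg.2 (one_div_two_mul_le_half hs₁.le)) haffine, hright, mul_zero, zero_add,
    Set.uIcc_of_ge zero_le_one, inv_neg, abs_neg, abs_of_pos (inv_pos.2 hslope), inv_div]

theorem map_W0_restrict_branch_two (hs₁ : 0 < s₁) :
    (volume.restrict (Set.Icc (1 / 2 - 1 / (2 * s₁)) (1 / 2))).map (W0 s₁ s₂) =
      ENNReal.ofReal s₁⁻¹ • volume.restrict (Set.Icc 0 (1 / 2)) := by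
  have haffine : Set.EqOn (W0 s₁ s₂) (fun x => s₁ * x + (1 / 2 - s₁ / 2))
      (Set.Ioo (1 / 2 - 1 / (2 * s₁)) (1 / 2)) := by
    rintro x ⟨hx_left, hx_right⟩
    rw [W0, if_neg hx_left.not_gt, if_pos hx_right]
    ring
  have hleft : s₁ * (1 / 2 - 1 / (2 * s₁)) + (1 / 2 - s₁ / 2) = 0 := by
    field_simp
    ring
  have hright : s₁ * (1 / 2) + (1 / 2 - s₁ / 2) = 1 / 2 := by ring
  rw [map_restrict_Icc_of_eqOn_affine hs₁.ne' (sub_le_self _ (by positivity)) haffine,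
    hleft, hright, Set.uIcc_of_le one_half_pos.le, abs_of_pos (inv_pos.2 hs₁)]

theorem map_W0_restrict_branch_three (hs₁ : 0 ≤ s₁) (hs₂ : 0 < s₂) :
    (volume.restrict (Set.Icc (1 / 2) (1 / 2 + 1 / (2 * s₂)))).map (W0 s₁ s₂) =
      ENNReal.ofReal s₂⁻¹ • volume.restrict (Set.Icc 0 (1 / 2)) := by
  have hbreak : 1 / 2 - 1 / (2 * s₁) ≤ 1 / 2 := sub_le_self _ (by positivity)
  have haffine : Set.EqOn (W0 s₁ s₂) (fun x => -s₂ * x + (1 / 2 + s₂ / 2))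
      (Set.Ioo (1 / 2) (1 / 2 + 1 / (2 * s₂))) := by
    rintro x ⟨hx_left, hx_right⟩
    rw [W0, if_neg (hbreak.trans_lt hx_left).not_gt, if_neg hx_left.not_gt, if_pos hx_right]
    ring
  have hleft : -s₂ * (1 / 2) + (1 / 2 + s₂ / 2) = 1 / 2 := by ring
  have hright : -s₂ * (1 / 2 + 1 / (2 * s₂)) + (1 / 2 + s₂ / 2) = 0 := by
    field_simp
    ring
  rw [map_restrict_Icc_of_eqOn_affine (neg_ne_zero.2 hs₂.ne')
    (le_add_of_nonneg_right (by positivity)) haffine,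
    hleft, hright, Set.uIcc_of_ge one_half_pos.le, inv_neg, abs_neg, abs_of_pos (inv_pos.2 hs₂)]

theorem map_W0_restrict_branch_four (hs₁ : 0 ≤ s₁) (hs₂ : 1 < s₂) :
    (volume.restrict (Set.Icc (1 / 2 + 1 / (2 * s₂)) 1)).map (W0 s₁ s₂) =
      ENNReal.ofReal ((s₂ - 1) / (2 * s₂)) • volume.restrict (Set.Icc 0 1) := by
  have hs₂_sub : 0 < s₂ - 1 := sub_pos.2 hs₂
  have hslope : 0 < 2 * s₂ / (s₂ - 1) := by positivity
  have hbreak₁ : 1 / 2 - 1 / (2 * s₁) ≤ 1 / 2 := sub_le_self _ (by positivity)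
  have hbreak₂ : 1 / 2 ≤ 1 / 2 + 1 / (2 * s₂) := le_add_of_nonneg_right (by positivity)
  have haffine : Set.EqOn (W0 s₁ s₂)
      (fun x => 2 * s₂ / (s₂ - 1) * x + (1 - 2 * s₂ / (s₂ - 1)))
      (Set.Ioo (1 / 2 + 1 / (2 * s₂)) 1) := by
    rintro x ⟨hx, -⟩
    rw [W0, if_neg ((hbreak₁.trans hbreak₂).trans_lt hx).not_gt,
      if_neg (hbreak₂.trans_lt hx).not_gt, if_neg hx.not_gt]
    ring
  have hleft : 2 * s₂ / (s₂ - 1) * (1 / 2 + 1 / (2 * s₂)) + (1 - 2 * s₂ / (s₂ - 1)) = 0 := by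
    field_simp
    ring
  have hright : 2 * s₂ / (s₂ - 1) * 1 + (1 - 2 * s₂ / (s₂ - 1)) = 1 := by ring
  rw [map_restrict_Icc_of_eqOn_affine hslope.ne' (by linarith [one_div_two_mul_le_half hs₂.le])
    haffine, hleft, hright, Set.uIcc_of_le zero_le_one, abs_of_pos (inv_pos.2 hslope), inv_div]

theorem map_W0_restrict_left_half (hs₁ : 1 < s₁) :
    (volume.restrict (Set.Icc 0 (1 / 2))).map (W0 s₁ s₂) =
      ENNReal.ofReal ((s₁ - 1) / (2 * s₁)) • volume.restrict (Set.Icc 0 1) +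
        ENNReal.ofReal s₁⁻¹ • volume.restrict (Set.Icc 0 (1 / 2)) := by
  have hsplit := restrict_Icc_add_restrict_Icc (volume : Measure ℝ)
    (sub_nonneg.2 (one_div_two_mul_le_half hs₁.le)) (sub_le_self (1 / 2) (by positivity))
  rw [← map_W0_restrict_branch_one hs₁, ← map_W0_restrict_branch_two (one_pos.trans hs₁),
    ← Measure.map_add _ _ (measurable_W0 s₁ s₂), hsplit]

theorem map_W0_restrict_right_half (hs₁ : 0 ≤ s₁) (hs₂ : 1 < s₂) :
    (volume.restrict (Set.Icc (1 / 2) 1)).map (W0 s₁ s₂) =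
      ENNReal.ofReal s₂⁻¹ • volume.restrict (Set.Icc 0 (1 / 2)) +
        ENNReal.ofReal ((s₂ - 1) / (2 * s₂)) • volume.restrict (Set.Icc 0 1) := by
  have hsplit := restrict_Icc_add_restrict_Icc (volume : Measure ℝ) (q := 1 / 2 + 1 / (2 * s₂))
    (r := 1) (le_add_of_nonneg_right (by positivity))
    (by linarith [one_div_two_mul_le_half hs₂.le])
  rw [← map_W0_restrict_branch_three hs₁ (one_pos.trans hs₂),
    ← map_W0_restrict_branch_four hs₁ hs₂, ← Measure.map_add _ _ (measurable_W0 s₁ s₂), hsplit]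

end Branches

/-- The measure on `[0, 1]` with constant Lebesgue density `a` on `[0, 1/2]` and `b` on
`[1/2, 1]`; negative densities are truncated to zero. Measures of this form are stable under
push-forward by `W0`, and the invariant measure is sought among them. -/
noncomputable def stepMeasure (a b : ℝ) : Measure ℝ :=
  ENNReal.ofReal a • volume.restrict (Set.Icc 0 (1 / 2)) +
    ENNReal.ofReal b • volume.restrict (Set.Icc (1 / 2) 1)

section StepMeasure

variable {a b s₁ s₂ : ℝ}

theorem isProbabilityMeasure_stepMeasure (ha : 0 ≤ a) (hb : 0 ≤ b) (hab : a + b = 2) :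
    IsProbabilityMeasure (stepMeasure a b) := by
  have hhalf : (1 : ℝ) - 1 / 2 = 1 / 2 := by norm_num
  have hmass : a * (1 / 2) + b * (1 / 2) = 1 := by linarith
  constructor
  simp only [stepMeasure, Measure.add_apply, Measure.smul_apply, smul_eq_mul,
    Measure.restrict_apply_univ, Real.volume_Icc, sub_zero, hhalf]
  rw [← ENNReal.ofReal_mul ha, ← ENNReal.ofReal_mul hb,
    ← ENNReal.ofReal_add (by positivity) (by positivity), hmass, ENNReal.ofReal_one]

theorem map_W0_stepMeasure (hs₁ : 1 < s₁) (hs₂ : 1 < s₂) (ha : 0 ≤ a) (hb : 0 ≤ b) :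
    (stepMeasure a b).map (W0 s₁ s₂) =
      stepMeasure
        (a * s₁⁻¹ + b * s₂⁻¹ + (a * ((s₁ - 1) / (2 * s₁)) + b * ((s₂ - 1) / (2 * s₂))))
        (a * ((s₁ - 1) / (2 * s₁)) + b * ((s₂ - 1) / (2 * s₂))) := by
  have : 0 < s₁ - 1 := sub_pos.2 hs₁
  have : 0 < s₂ - 1 := sub_pos.2 hs₂
  rw [stepMeasure, Measure.map_add _ _ (measurable_W0 s₁ s₂), Measure.map_smul, Measure.map_smul,
    map_W0_restrict_left_half hs₁, map_W0_restrict_right_half (by positivity) hs₂,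
    ← restrict_Icc_add_restrict_Icc volume one_half_pos.le one_half_lt_one.le, stepMeasure]
  repeat rw [ENNReal.ofReal_add (by positivity) (by positivity)]
  simp only [ENNReal.ofReal_mul ha, ENNReal.ofReal_mul hb]
  module

theorem measurePreserving_W0_stepMeasure (hs₁ : 1 < s₁) (hs₂ : 1 < s₂) (ha : 0 ≤ a) (hb : 0 ≤ b)
    (hleft : a * s₁⁻¹ + b * s₂⁻¹ + b = a)
    (hright : a * ((s₁ - 1) / (2 * s₁)) + b * ((s₂ - 1) / (2 * s₂)) = b) :
    MeasurePreserving (W0 s₁ s₂) (stepMeasure a b) (stepMeasure a b) :=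
  ⟨measurable_W0 s₁ s₂, by rw [map_W0_stepMeasure hs₁ hs₂ ha hb, hright, hleft]⟩

end StepMeasure

/-- The value of `h0` on `[0, 1/2)`. -/
noncomputable def h0Left (s₁ s₂ : ℝ) : ℝ := 2 * s₁ * (s₂ + 1) / (2 * s₁ * s₂ + s₁ - s₂)

/-- The value of `h0` on `[1/2, 1]`. -/
noncomputable def h0Right (s₁ s₂ : ℝ) : ℝ := 2 * s₂ * (s₁ - 1) / (2 * s₁ * s₂ + s₁ - s₂)

section Density

variable {s₁ s₂ : ℝ}

theorem withDensity_h0_eq_stepMeasure (s₁ s₂ : ℝ) :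
    (volume.restrict (Set.Icc (0 : ℝ) 1)).withDensity (fun x => ENNReal.ofReal (h0 s₁ s₂ x)) =
      stepMeasure (h0Left s₁ s₂) (h0Right s₁ s₂) := by
  refine withDensity_restrict_Icc_of_eqOn_const volume one_half_pos.le one_half_lt_one.le ?_ ?_
  · rintro x ⟨-, hx⟩
    simp only [h0, h0Left, if_pos hx]
  · rintro x ⟨hx, -⟩
    simp only [h0, h0Right, if_neg hx.not_gt]

theorem h0_denom_pos (hs₁ : 1 ≤ s₁) (hs₂ : 0 < s₂) : 0 < 2 * s₁ * s₂ + s₁ - s₂ := by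
  nlinarith

theorem h0Left_nonneg (hs₁ : 1 ≤ s₁) (hs₂ : 0 < s₂) : 0 ≤ h0Left s₁ s₂ :=
  div_nonneg (by positivity) (h0_denom_pos hs₁ hs₂).le

theorem h0Right_nonneg (hs₁ : 1 ≤ s₁) (hs₂ : 0 < s₂) : 0 ≤ h0Right s₁ s₂ :=
  div_nonneg (mul_nonneg (by positivity) (sub_nonneg.2 hs₁)) (h0_denom_pos hs₁ hs₂).le

theorem h0Left_add_h0Right (hs₁ : 1 ≤ s₁) (hs₂ : 0 < s₂) : h0Left s₁ s₂ + h0Right s₁ s₂ = 2 := by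
  rw [h0Left, h0Right, ← add_div, div_eq_iff (h0_denom_pos hs₁ hs₂).ne']
  ring

theorem h0_balance_left (hs₁ : 1 ≤ s₁) (hs₂ : 0 < s₂) :
    h0Left s₁ s₂ * s₁⁻¹ + h0Right s₁ s₂ * s₂⁻¹ + h0Right s₁ s₂ = h0Left s₁ s₂ := by
  have hdenom := (h0_denom_pos hs₁ hs₂).ne'
  rw [h0Left, h0Right]
  field_simp [hdenom]
  ring

theorem h0_balance_right (hs₁ : 1 ≤ s₁) (hs₂ : 0 < s₂) :
    h0Left s₁ s₂ * ((s₁ - 1) / (2 * s₁)) + h0Right s₁ s₂ * ((s₂ - 1) / (2 * s₂)) =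
      h0Right s₁ s₂ := by
  have hdenom := (h0_denom_pos hs₁ hs₂).ne'
  rw [h0Left, h0Right]
  field_simp [hdenom]
  ring

end Density

/-- The piecewise constant function `h0` is the normalized invariant density of `W₀`:
the measure with density `h0` with respect to Lebesgue measure on `[0,1]` is a
probability measure invariant under `W₀`. -/
theorem h0_invariant_density_of_W0
    (s₁ s₂ : ℝ) (hs₁ : 1 < s₁) (hs₂ : 1 < s₂) :
    IsProbabilityMeasure
      ((volume.restrict (Set.Icc (0:ℝ) 1)).withDensity
        (fun x => ENNReal.ofReal (h0 s₁ s₂ x))) ∧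
    ∀ A : Set ℝ, MeasurableSet A →
      ((volume.restrict (Set.Icc (0:ℝ) 1)).withDensity
        (fun x => ENNReal.ofReal (h0 s₁ s₂ x))) (W0 s₁ s₂ ⁻¹' A) =
      ((volume.restrict (Set.Icc (0:ℝ) 1)).withDensity
        (fun x => ENNReal.ofReal (h0 s₁ s₂ x))) A := by
  have hs₂_pos : 0 < s₂ := one_pos.trans hs₂
  have hleft_nonneg := h0Left_nonneg hs₁.le hs₂_pos
  have hright_nonneg := h0Right_nonneg hs₁.le hs₂_pos
  rw [withDensity_h0_eq_stepMeasure]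
  refine ⟨isProbabilityMeasure_stepMeasure hleft_nonneg hright_nonneg
    (h0Left_add_h0Right hs₁.le hs₂_pos), fun A hA => ?_⟩
  have hW0 := measurePreserving_W0_stepMeasure hs₁ hs₂ hleft_nonneg hright_nonneg
    (h0_balance_left hs₁.le hs₂_pos) (h0_balance_right hs₁.le hs₂_pos)
  exact hW0.measure_preimage hA.nullMeasurableSet
end

section
/- Suppose 1/s₁ + 1/s₂ = 1. Then lim_{a→0⁺} a·k(a) = 0, where k(a) is the first iterate at which the trajectory of 1/2 under W_a drops below 1/2 − (1/2+ra)/(s₁+pa). -/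
open MeasureTheory Filter Topology

/-- `k(a)`: the first iterate `j ≥ 1` at which the trajectory of `1/2` under `W_a`
drops below `1/2 − (1/2+ra)/(s₁+pa)`. -/
noncomputable def kIndex (s₁ s₂ p q r a : ℝ) : ℕ :=
  sInf {j : ℕ | 1 ≤ j ∧
    (Wmap s₁ s₂ p q r a)^[j] (1/2) ≤ 1/2 - (1/2 + r*a)/(s₁ + p*a)}

/-- `k₁(a) = ⌊2k(a)/3⌋`, the integer part of `2k(a)/3`. -/
noncomputable def kIndex1 (s₁ s₂ p q r a : ℝ) : ℕ :=
  2 * kIndex s₁ s₂ p q r a / 3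

/-!
The branch of `W_a` just to the left of `1/2` has slope `S₁ = s₁ + pa` and a repelling fixed point
`x* = 1/2 - ra/(S₁ - 1)`. With `S₂ = s₂ + qa`, two iterations move `1/2` to `x* - d(a)`, where
`d(a) = ra((S₁ - 1)(S₂ - 1) - 1)/(S₁ - 1)`. If `d(a) > 0`, each further iteration multiplies the
distance to `x*` by `S₁`, so `k(a)` is at most of order `log (1/d(a))`. When `1/s₁ + 1/s₂ = 1` the
constant term of `(S₁ - 1)(S₂ - 1) - 1` vanishes but the linear one does not, so `d(a)` is of order
`a²`, and `a log a → 0`.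
-/

theorem iterate_eq_sub_pow_mul_of_forall_lt {R : Type*} [CommRing R] [LinearOrder R]
    [IsStrictOrderedRing R] {f : R → R} {t c S d : R}
    (hf : ∀ x, t < x → x < c → f x = c - S * (c - x)) (hS : 0 < S) (hd : 0 < d) {n : ℕ}
    (hn : ∀ j < n, t < f^[j] (c - d)) : f^[n] (c - d) = c - S ^ n * d := by
  induction n with
  | zero => simp
  | succ n ih =>
    have ih' := ih fun j hj => hn j (hj.trans n.lt_succ_self)
    have hlow : t < c - S ^ n * d := ih' ▸ hn n n.lt_succ_self
    have hlt : c - S ^ n * d < c := sub_lt_self c (by positivity)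
    rw [Function.iterate_succ_apply', ih', hf _ hlow hlt]
    ring

theorem natCast_le_abs_log_div_log_of_pow_mul_lt_one {σ d : ℝ} (hσ : 1 < σ) (hd : 0 < d) {n : ℕ}
    (h : σ ^ n * d < 1) : (n : ℝ) ≤ |Real.log d| / Real.log σ := by
  have hlog : n * Real.log σ + Real.log d < 0 := by
    rw [← Real.log_pow, ← Real.log_mul (by positivity) hd.ne']
    exact Real.log_neg (by positivity) h
  rw [le_div_iff₀ (Real.log_pos hσ)]
  linarith [neg_abs_le (Real.log d)]

theorem tendsto_mul_natCast_of_pow_mul_lt_one {α : Type*} {l : Filter α} {w d : α → ℝ}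
    {k : α → ℕ} {σ : ℝ} (m : ℕ) (hσ : 1 < σ) (hw_nonneg : ∀ᶠ a in l, 0 ≤ w a)
    (hw : Tendsto w l (𝓝 0)) (hd : ∀ᶠ a in l, 0 < d a)
    (hwd : Tendsto (fun a => w a * Real.log (d a)) l (𝓝 0))
    (hk : ∀ᶠ a in l, ∀ n, n + m < k a → σ ^ n * d a < 1) :
    Tendsto (fun a => w a * k a) l (𝓝 0) := by
  have hlogσ : 0 < Real.log σ := Real.log_pos hσ
  have hbound : Tendsto (fun a => w a * (m + 1) + |w a * Real.log (d a)| / Real.log σ) l (𝓝 0) := by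
    simpa using (hw.mul_const ((m : ℝ) + 1)).add (hwd.abs.div_const (Real.log σ))
  refine squeeze_zero' (hw_nonneg.mono fun a ha => by positivity) ?_ hbound
  filter_upwards [hw_nonneg, hd, hk] with a hwa hda hka
  have hk_le : (k a : ℝ) ≤ m + 1 + |Real.log (d a)| / Real.log σ := by
    rcases le_or_gt (k a) m with hkm | hmk
    · have hkm' : (k a : ℝ) ≤ m := by exact_mod_cast hkm
      linarith [show 0 ≤ |Real.log (d a)| / Real.log σ by positivity]
    · obtain ⟨n, hn⟩ := Nat.exists_eq_add_of_lt hmk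
      have hn_le := natCast_le_abs_log_div_log_of_pow_mul_lt_one hσ hda (hka n (by omega))
      rw [hn]
      push_cast
      linarith
  calc w a * k a ≤ w a * (m + 1 + |Real.log (d a)| / Real.log σ) :=
        mul_le_mul_of_nonneg_left hk_le hwa
    _ = w a * (m + 1) + |w a * Real.log (d a)| / Real.log σ := by
        rw [abs_mul, abs_of_nonneg hwa]
        ring

theorem tendsto_mul_log_const_mul_pow {c : ℝ} (hc : c ≠ 0) (N : ℕ) :
    Tendsto (fun a : ℝ => a * Real.log (c * a ^ N)) (𝓝[≠] 0) (𝓝 0) := by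
  have hlim : Tendsto (fun a : ℝ => a * Real.log c + N * (a * Real.log a)) (𝓝 0) (𝓝 0) := by
    simpa using (tendsto_id.mul_const (Real.log c)).add
      ((Real.continuous_mul_log.tendsto 0).const_mul (N : ℝ))
  refine (hlim.mono_left nhdsWithin_le_nhds).congr' ?_
  filter_upwards [self_mem_nhdsWithin] with a (ha : a ≠ 0)
  rw [Real.log_mul hc (pow_ne_zero N ha), Real.log_pow]
  ring

theorem sub_one_mul_sub_one_sub_one {K : Type*} [Field K] {s t : K} (hs : s ≠ 0) (ht : t ≠ 0) :
    (s - 1) * (t - 1) - 1 = s * t * (1 - (1 / s + 1 / t)) := by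
  field_simp
  ring

namespace Wmap

/-- The left endpoint of the increasing branch of `W_a` ending at `1/2`; the index `k(a)` is the
first time the orbit of `1/2` reaches a point at or below it. -/
noncomputable def leftBreak (s₁ p r a : ℝ) : ℝ :=
  1 / 2 - (1 / 2 + r * a) / (s₁ + p * a)

/-- The fixed point `x*` of the increasing branch of `W_a` ending at `1/2`, which repels the orbit
of `1/2`. It is meaningful for slope `s₁ + p * a ≠ 1`. -/
noncomputable def leftFixedPt (s₁ p r a : ℝ) : ℝ :=
  1 / 2 - r * a / (s₁ + p * a - 1)

/-- The signed distance `x* - W_a (W_a (1/2))` by which the second iterate of `1/2` overshoots the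
repelling fixed point `x*`, as an explicit formula valid for small `a > 0`. -/
noncomputable def overshoot (s₁ s₂ p q r a : ℝ) : ℝ :=
  r * a * ((s₁ + p * a - 1) * (s₂ + q * a - 1) - 1) / (s₁ + p * a - 1)

section FixedParameter

variable {s₁ s₂ p q r a : ℝ}

theorem leftBreak_lt_half (hS₁ : 0 < s₁ + p * a) (hra : 0 < r * a) :
    leftBreak s₁ p r a < 1 / 2 :=
  sub_lt_self _ (by positivity)

theorem apply_of_leftBreak_lt_of_lt_half (hS₁ : s₁ + p * a ≠ 1) {x : ℝ}
    (hx : leftBreak s₁ p r a < x) (hx' : x < 1 / 2) :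
    Wmap s₁ s₂ p q r a x
      = leftFixedPt s₁ p r a - (s₁ + p * a) * (leftFixedPt s₁ p r a - x) := by
  have hS₁' : s₁ + p * a - 1 ≠ 0 := sub_ne_zero.2 hS₁
  rw [Wmap, ← leftBreak, if_neg (not_lt.2 hx.le), if_pos hx', leftFixedPt]
  field_simp
  ring

theorem apply_of_half_le (hbreak : leftBreak s₁ p r a < 1 / 2) {x : ℝ} (hx : 1 / 2 ≤ x)
    (hx' : x < 1 / 2 + (1 / 2 + r * a) / (s₂ + q * a)) :
    Wmap s₁ s₂ p q r a x = -(s₂ + q * a) * (x - 1 / 2) + 1 / 2 + r * a := by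
  rw [Wmap, ← leftBreak, if_neg (not_lt.2 (hbreak.le.trans hx)), if_neg (not_lt.2 hx), if_pos hx']

theorem leftFixedPt_sub_overshoot (hS₁ : s₁ + p * a ≠ 1) :
    leftFixedPt s₁ p r a - overshoot s₁ s₂ p q r a
      = -(s₂ + q * a) * (r * a) + 1 / 2 + r * a := by
  have hS₁' : s₁ + p * a - 1 ≠ 0 := sub_ne_zero.2 hS₁
  have hcancel : r * a * ((s₁ + p * a - 1) * (s₂ + q * a - 1) - 1)
      = (s₁ + p * a - 1) * (r * a * (s₂ + q * a - 1)) - r * a := by ring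
  rw [leftFixedPt, overshoot, hcancel, sub_div, mul_div_cancel_left₀ _ hS₁']
  ring

theorem iterate_two_half (hS₁ : 1 < s₁ + p * a) (hra : 0 < r * a)
    (hsmall : r * a < (1 / 2 + r * a) / (s₂ + q * a)) :
    (Wmap s₁ s₂ p q r a)^[2] (1 / 2) = leftFixedPt s₁ p r a - overshoot s₁ s₂ p q r a := by
  have hbreak : leftBreak s₁ p r a < 1 / 2 := leftBreak_lt_half (one_pos.trans hS₁) hra
  have hfirst : Wmap s₁ s₂ p q r a (1 / 2) = 1 / 2 + r * a := by
    rw [apply_of_half_le hbreak le_rfl (by linarith)]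
    ring
  rw [Function.iterate_succ_apply, Function.iterate_one, hfirst,
    apply_of_half_le hbreak (by linarith) (by linarith), leftFixedPt_sub_overshoot hS₁.ne',
    add_sub_cancel_left]

theorem leftFixedPt_sub_leftBreak_lt_one (hS₁ : 1 < s₁ + p * a) (hra : 0 ≤ r * a) :
    leftFixedPt s₁ p r a - leftBreak s₁ p r a < 1 := by
  have hshift : r * a / (s₁ + p * a) ≤ r * a / (s₁ + p * a - 1) :=
    div_le_div_of_nonneg_left hra (sub_pos.2 hS₁) (by linarith)
  have hhalf : 1 / 2 / (s₁ + p * a) < 1 := by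
    rw [div_lt_one (by linarith)]
    linarith
  rw [leftFixedPt, leftBreak, add_div]
  linarith

theorem leftBreak_lt_iterate_of_lt_kIndex {j : ℕ} (hj : 1 ≤ j) (hjk : j < kIndex s₁ s₂ p q r a) :
    leftBreak s₁ p r a < (Wmap s₁ s₂ p q r a)^[j] (1 / 2) :=
  lt_of_not_ge fun hle => Nat.notMem_of_lt_sInf hjk ⟨hj, hle⟩

theorem pow_mul_overshoot_lt_one_of_lt_kIndex (hS₁ : 1 < s₁ + p * a) (hra : 0 < r * a)
    (hsmall : r * a < (1 / 2 + r * a) / (s₂ + q * a)) (hd : 0 < overshoot s₁ s₂ p q r a) {n : ℕ}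
    (hn : n + 2 < kIndex s₁ s₂ p q r a) : (s₁ + p * a) ^ n * overshoot s₁ s₂ p q r a < 1 := by
  have hfix : leftFixedPt s₁ p r a < 1 / 2 := sub_lt_self _ (div_pos hra (sub_pos.2 hS₁))
  have hlow : ∀ j ≤ n, leftBreak s₁ p r a <
      (Wmap s₁ s₂ p q r a)^[j] (leftFixedPt s₁ p r a - overshoot s₁ s₂ p q r a) := by
    intro j hj
    rw [← iterate_two_half hS₁ hra hsmall, ← Function.iterate_add_apply]
    exact leftBreak_lt_iterate_of_lt_kIndex (by omega) (by omega)
  have hform := iterate_eq_sub_pow_mul_of_forall_lt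
    (fun x hx hx' => apply_of_leftBreak_lt_of_lt_half hS₁.ne' hx (hx'.trans hfix))
    (one_pos.trans hS₁) hd fun j hj => hlow j hj.le
  have hlast := hlow n le_rfl
  rw [hform] at hlast
  linarith [leftFixedPt_sub_leftBreak_lt_one hS₁ hra.le]

end FixedParameter

section SmallParameter

variable {s₁ s₂ p q r : ℝ}

theorem tendsto_const_add_mul (s p : ℝ) : Tendsto (fun a : ℝ => s + p * a) (𝓝[>] 0) (𝓝 s) := by
  have hcont : Continuous fun a : ℝ => s + p * a := by fun_prop
  simpa using (hcont.tendsto 0).mono_left nhdsWithin_le_nhds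

theorem eventually_mul_lt_half_add_div (hs₂ : 0 < s₂) :
    ∀ᶠ a in 𝓝[>] (0 : ℝ), r * a < (1 / 2 + r * a) / (s₂ + q * a) := by
  have hleft : Tendsto (fun a : ℝ => r * a) (𝓝[>] 0) (𝓝 0) := by
    simpa using tendsto_const_add_mul 0 r
  have hright := (tendsto_const_add_mul (1 / 2) r).div (tendsto_const_add_mul s₂ q) hs₂.ne'
  exact hleft.eventually_lt hright (by positivity)

theorem exists_eventually_mul_le_sub_one_mul_sub_one (hss : 0 < s₁ * s₂)
    (h : 1 / s₁ + 1 / s₂ < 1 ∨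
      1 / s₁ + 1 / s₂ = 1 ∧ 0 < p * (s₂ - 1) + q * (s₁ - 1)) :
    ∃ κ > 0, ∀ᶠ a in 𝓝[>] (0 : ℝ), κ * a ≤ (s₁ + p * a - 1) * (s₂ + q * a - 1) - 1 := by
  have hδ := sub_one_mul_sub_one_sub_one (left_ne_zero_of_mul hss.ne')
    (right_ne_zero_of_mul hss.ne')
  rcases h with hlt | ⟨heq, hslope⟩
  · have hconst : 0 < (s₁ - 1) * (s₂ - 1) - 1 := hδ ▸ mul_pos hss (sub_pos.2 hlt)
    have hleft : Tendsto (fun a : ℝ => 1 * a) (𝓝[>] 0) (𝓝 0) := by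
      simpa using tendsto_const_add_mul 0 1
    have hright := (((tendsto_const_add_mul s₁ p).sub_const 1).mul
      ((tendsto_const_add_mul s₂ q).sub_const 1)).sub_const 1
    exact ⟨1, one_pos, (hleft.eventually_lt hright hconst).mono fun a => le_of_lt⟩
  · set L := p * (s₂ - 1) + q * (s₁ - 1) with hL
    have hconst : (s₁ - 1) * (s₂ - 1) - 1 = 0 := by rw [hδ, heq, sub_self, mul_zero]
    have hhalf : ∀ᶠ a in 𝓝[>] (0 : ℝ), L / 2 < L + p * q * a :=
      (tendsto_const_add_mul L (p * q)).eventually_const_lt (half_lt_self hslope)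
    refine ⟨L / 2, half_pos hslope, ?_⟩
    filter_upwards [hhalf, self_mem_nhdsWithin] with a ha (ha_pos : 0 < a)
    calc L / 2 * a ≤ (L + p * q * a) * a := mul_le_mul_of_nonneg_right ha.le ha_pos.le
      _ = (s₁ + p * a - 1) * (s₂ + q * a - 1) - 1 := by linear_combination a * hL - hconst

theorem eventually_mul_sq_le_overshoot (hs₁ : 1 < s₁) (hr : 0 ≤ r) {κ : ℝ} (hκ : 0 ≤ κ)
    (h : ∀ᶠ a in 𝓝[>] (0 : ℝ), κ * a ≤ (s₁ + p * a - 1) * (s₂ + q * a - 1) - 1) :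
    ∀ᶠ a in 𝓝[>] (0 : ℝ), r * κ / s₁ * a ^ 2 ≤ overshoot s₁ s₂ p q r a := by
  filter_upwards [h, self_mem_nhdsWithin, (tendsto_const_add_mul s₁ p).eventually_const_lt hs₁,
    (tendsto_const_add_mul s₁ p).eventually_lt_const (lt_add_one s₁)]
    with a hκa (ha : 0 < a) hS₁ hS₁'
  have hra : 0 ≤ r * a := by positivity
  calc r * κ / s₁ * a ^ 2 = r * a * (κ * a) / s₁ := by ring
    _ ≤ r * a * (κ * a) / (s₁ + p * a - 1) :=
        div_le_div_of_nonneg_left (by positivity) (sub_pos.2 hS₁) (by linarith)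
    _ ≤ overshoot s₁ s₂ p q r a :=
        div_le_div_of_nonneg_right (mul_le_mul_of_nonneg_left hκa hra) (sub_pos.2 hS₁).le

end SmallParameter

end Wmap

open Wmap in
/-- `hpos` says that `(s₁ + p * a - 1) * (s₂ + q * a - 1) > 1` for small `a > 0`, so that the second
iterate of `1/2` lies below the repelling fixed point and `kIndex` is the minimum of a nonempty set,
not the junk value `sInf ∅ = 0`. -/
theorem Wmap_a_mul_k_tendsto_zero_eq_one_general
    (s₁ s₂ p q r : ℝ) (hs₁ : 1 < s₁) (hs₂ : 1 < s₂) (hr : 0 < r)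
    (hpos : 1 / s₁ + 1 / s₂ < 1 ∨
      1 / s₁ + 1 / s₂ = 1 ∧ 0 < p * (s₂ - 1) + q * (s₁ - 1)) :
    Tendsto (fun a => a * (kIndex s₁ s₂ p q r a : ℝ)) (𝓝[>] (0 : ℝ)) (𝓝 0) := by
  obtain ⟨κ, hκ, hlinear⟩ := exists_eventually_mul_le_sub_one_mul_sub_one (by positivity) hpos
  obtain ⟨σ, hσ, hσs₁⟩ := exists_between hs₁
  have hc : 0 < r * κ / s₁ := by positivity
  have ha_pos : ∀ᶠ a in 𝓝[>] (0 : ℝ), 0 < a := self_mem_nhdsWithin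
  refine tendsto_mul_natCast_of_pow_mul_lt_one (d := fun a => r * κ / s₁ * a ^ 2) 2 hσ
    (ha_pos.mono fun a => le_of_lt) (tendsto_id.mono_left nhdsWithin_le_nhds)
    (ha_pos.mono fun a ha => by positivity)
    ((tendsto_mul_log_const_mul_pow hc.ne' 2).mono_left (nhdsGT_le_nhdsNE 0)) ?_
  filter_upwards [ha_pos, (tendsto_const_add_mul s₁ p).eventually_const_lt hσs₁,
    eventually_mul_lt_half_add_div (one_pos.trans hs₂),
    eventually_mul_sq_le_overshoot hs₁ hr.le hκ.le hlinear] with a ha hσS₁ hsmall hsq n hn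
  have hd : 0 < overshoot s₁ s₂ p q r a := lt_of_lt_of_le (by positivity) hsq
  calc σ ^ n * (r * κ / s₁ * a ^ 2) ≤ (s₁ + p * a) ^ n * overshoot s₁ s₂ p q r a := by
        have hS₁_pos : 0 < s₁ + p * a := by linarith
        gcongr
    _ < 1 := pow_mul_overshoot_lt_one_of_lt_kIndex (hσ.trans hσS₁) (mul_pos hr ha) hsmall hd hn

/-- Lemma 3(II): if `1/s₁ + 1/s₂ = 1`, then `a·k(a) → 0` as `a → 0⁺`. -/
theorem Wmap_a_mul_k_tendsto_zero_eq_one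
    (s₁ s₂ p q r : ℝ) (hs₁ : 1 < s₁) (hs₂ : 1 < s₂)
    (hp : 0 < p) (hq : 0 < q) (hr : 0 < r)
    (hsum : 1/s₁ + 1/s₂ = 1) :
    Tendsto (fun a => a * (kIndex s₁ s₂ p q r a : ℝ)) (𝓝[>] (0:ℝ)) (𝓝 0) :=
  Wmap_a_mul_k_tendsto_zero_eq_one_general s₁ s₂ p q r hs₁ hs₂ hr
    (.inr ⟨hsum, add_pos (mul_pos hp (sub_pos.2 hs₂)) (mul_pos hq (sub_pos.2 hs₁))⟩)
end

section
/- Suppose 1/s₁ + 1/s₂ = 1. Then lim_{a→0⁺} 1/(a·(s₁+pa)^{k(a)}) = 0; moreover, for all sufficiently small a > 0, 1/(a·(s₁+pa)^{k(a)}) ≤ 2a(r(qs₁+ps₂−p−q)+rpqa)/((s₁−1+pa−2ra)(s₁+pa)). -/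
open MeasureTheory Filter Topology

/-!
Write `σ = s₁ + pa` and `τ = s₂ + qa`. The second branch of `W_a` has slope `σ > 1` and the fixed
point `c = 1/2 - ra/(σ - 1)`, and `W_a² (1/2)` lies below `c` by `ra (στ - σ - τ) / (σ - 1)`.
From then on each step multiplies the distance to `c` by `σ`, until the orbit leaves the branch
through its left end `b = 1/2 - (1/2 + ra)/σ`. Hence `c - b ≤ σ ^ (k - 2) * (c - W_a² (1/2))`, which
bounds `1 / (a σ ^ k)` by a multiple of `στ - σ - τ`. When `1/s₁ + 1/s₂ = 1`, that quantity is
`O(a)`.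
-/

section ExpandingFixedPoint

variable {𝕜 : Type*} [Field 𝕜] [LinearOrder 𝕜] [IsStrictOrderedRing 𝕜]
  {f : 𝕜 → 𝕜} {s b c x : 𝕜}

theorem iterate_eq_sub_pow_mul_of_lt_iterate (hs : 0 < s)
    (hf : ∀ y ∈ Set.Ioo b c, f y = c - s * (c - y)) (hx : x < c) {n : ℕ}
    (hn : ∀ i < n, b < f^[i] x) : f^[n] x = c - s ^ n * (c - x) := by
  induction n with
  | zero => simp
  | succ n ih =>
    have hiter : f^[n] x = c - s ^ n * (c - x) := ih fun i hi => hn i (by lia)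
    have hlt : f^[n] x < c := by
      rw [hiter]
      exact sub_lt_self c (mul_pos (pow_pos hs n) (sub_pos.2 hx))
    rw [Function.iterate_succ_apply', hf _ ⟨hn n n.lt_succ_self, hlt⟩, hiter]
    ring

theorem exists_iterate_le_of_expanding [Archimedean 𝕜] (hs : 1 < s)
    (hf : ∀ y ∈ Set.Ioo b c, f y = c - s * (c - y)) (hx : x < c) : ∃ n, f^[n] x ≤ b := by
  by_contra! hstay
  obtain ⟨n, hn⟩ := pow_unbounded_of_one_lt ((c - b) / (c - x)) hs
  rw [div_lt_iff₀ (sub_pos.2 hx)] at hn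
  have hiter := iterate_eq_sub_pow_mul_of_lt_iterate (zero_lt_one.trans hs) hf hx
    fun i (_ : i < n) => hstay i
  linarith [hstay n]

end ExpandingFixedPoint

/-- The left end of the second branch of a W-like map that has slope `s` on that branch and takes
the value `1/2 + h` at `1/2`: the point where the line through `(1/2, 1/2 + h)` of slope `s`
vanishes. -/
noncomputable def leftKnot (s h : ℝ) : ℝ := 1 / 2 - (1 / 2 + h) / s

/-- The fixed point of the affine map `x ↦ s (x - 1/2) + 1/2 + h`, the second branch of a W-like
map; for `s = 1` this is the junk value `1/2`. -/
noncomputable def leftFixedPoint (s h : ℝ) : ℝ := 1 / 2 - h / (s - 1)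

theorem leftKnot_lt_half {s h : ℝ} (hs : 0 < s) (hh : 0 < h) : leftKnot s h < 1 / 2 :=
  sub_lt_self _ (by positivity)

theorem leftFixedPoint_lt_half {s h : ℝ} (hs : 1 < s) (hh : 0 < h) : leftFixedPoint s h < 1 / 2 :=
  sub_lt_self _ (div_pos hh (sub_pos.2 hs))

theorem leftFixedPoint_sub_leftKnot {s h : ℝ} (hs₀ : s ≠ 0) (hs₁ : s ≠ 1) :
    leftFixedPoint s h - leftKnot s h = (s - 1 - 2 * h) / (2 * s * (s - 1)) := by
  rw [← sub_ne_zero] at hs₁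
  unfold leftFixedPoint leftKnot
  field_simp
  ring

section Orbit

variable {s₁ s₂ p q r a x : ℝ}

local notation "W" => Wmap s₁ s₂ p q r a
local notation "σ" => (s₁ + p * a)
local notation "τ" => (s₂ + q * a)

theorem Wmap_of_leftKnot_le_of_lt_half (hknot : leftKnot σ (r * a) ≤ x) (hx : x < 1 / 2) :
    W x = σ * (x - 1 / 2) + 1 / 2 + r * a := by
  rw [leftKnot] at hknot
  rw [Wmap, if_neg hknot.not_gt, if_pos hx]

theorem Wmap_of_half_le (hσ : 0 < σ) (hra : 0 < r * a) (hx : 1 / 2 ≤ x)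
    (hknot : x < 1 / 2 + (1 / 2 + r * a) / τ) :
    W x = -τ * (x - 1 / 2) + 1 / 2 + r * a := by
  have hleft := (leftKnot_lt_half hσ hra).trans_le hx
  rw [leftKnot] at hleft
  rw [Wmap, if_neg hleft.not_gt, if_neg hx.not_gt, if_pos hknot]

theorem Wmap_eq_leftFixedPoint_sub (hσ : 1 < σ) (hra : 0 < r * a)
    (hx : x ∈ Set.Ioo (leftKnot σ (r * a)) (leftFixedPoint σ (r * a))) :
    W x = leftFixedPoint σ (r * a) - σ * (leftFixedPoint σ (r * a) - x) := by
  rw [Wmap_of_leftKnot_le_of_lt_half hx.1.le (hx.2.trans (leftFixedPoint_lt_half hσ hra))]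
  have hσ_sub : σ - 1 ≠ 0 := by linarith
  unfold leftFixedPoint
  field_simp
  ring

theorem Wmap_half_s9 (hσ : 0 < σ) (hτ : 0 < τ) (hra : 0 < r * a) :
    W (1 / 2) = 1 / 2 + r * a := by
  rw [Wmap_of_half_le hσ hra le_rfl (lt_add_of_pos_right _ (by positivity))]
  ring

theorem Wmap_Wmap_half (hσ : 0 < σ) (hτ : 0 < τ) (hra : 0 < r * a)
    (hpeak : τ * (r * a) < 1 / 2 + r * a) :
    W (W (1 / 2)) = 1 / 2 + r * a - τ * (r * a) := by
  have hknot : r * a < (1 / 2 + r * a) / τ := (lt_div_iff₀' hτ).2 hpeak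
  rw [Wmap_half_s9 hσ hτ hra, Wmap_of_half_le hσ hra (by linarith) (by linarith)]
  ring

theorem leftFixedPoint_sub_Wmap_Wmap_half (hσ : 1 < σ) (hτ : 0 < τ) (hra : 0 < r * a)
    (hpeak : τ * (r * a) < 1 / 2 + r * a) :
    leftFixedPoint σ (r * a) - W (W (1 / 2)) = r * a * (σ * τ - σ - τ) / (σ - 1) := by
  have hσ_sub : σ - 1 ≠ 0 := by linarith
  rw [Wmap_Wmap_half (by linarith) hτ hra hpeak, leftFixedPoint]
  generalize σ = s at hσ_sub ⊢
  field_simp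
  ring

theorem exists_kIndex_eq_add_two (hσ : 0 < σ) (hτ : 0 < τ) (hra : 0 < r * a)
    (hexit : ∃ n, W^[n] (W (W (1 / 2))) ≤ leftKnot σ (r * a)) :
    ∃ n, kIndex s₁ s₂ p q r a = n + 2 ∧ W^[n] (W (W (1 / 2))) ≤ leftKnot σ (r * a) ∧
      ∀ i < n, leftKnot σ (r * a) < W^[i] (W (W (1 / 2))) := by
  obtain ⟨m, hm⟩ := hexit
  obtain ⟨hk_pos, hk_le⟩ : 1 ≤ kIndex s₁ s₂ p q r a ∧
      W^[kIndex s₁ s₂ p q r a] (1 / 2) ≤ leftKnot σ (r * a) :=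
    Nat.sInf_mem (s := {j | 1 ≤ j ∧ _}) ⟨m + 2, by lia, hm⟩
  have hk_ne : kIndex s₁ s₂ p q r a ≠ 1 := by
    intro hk
    rw [hk, Function.iterate_one, Wmap_half_s9 hσ hτ hra] at hk_le
    linarith [leftKnot_lt_half hσ hra]
  obtain ⟨n, hn⟩ := Nat.exists_eq_add_of_le' (show 2 ≤ kIndex s₁ s₂ p q r a by lia)
  rw [hn] at hk_le
  refine ⟨n, hn, hk_le, fun i hi => ?_⟩
  have hnot_mem := Nat.notMem_of_lt_sInf (show i + 2 < kIndex s₁ s₂ p q r a by lia)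
  exact not_le.1 fun hle => hnot_mem ⟨by lia, hle⟩

theorem mul_sub_le_pow_kIndex_mul (hσ : 1 < σ) (hra : 0 < r * a)
    (hpeak : τ * (r * a) < 1 / 2 + r * a) (hστ : 0 < σ * τ - σ - τ) :
    σ * (σ - 1 - 2 * (r * a)) ≤
      σ ^ kIndex s₁ s₂ p q r a * (2 * (r * a) * (σ * τ - σ - τ)) := by
  have hσ_pos : 0 < σ := by linarith
  have hσ_sub : 0 < σ - 1 := by linarith
  have hτ : 0 < τ := by nlinarith
  have hdist := leftFixedPoint_sub_Wmap_Wmap_half hσ hτ hra hpeak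
  have hbelow : W (W (1 / 2)) < leftFixedPoint σ (r * a) := by
    rw [← sub_pos, hdist]
    positivity
  have hexpand (y) := Wmap_eq_leftFixedPoint_sub (s₂ := s₂) (q := q) (x := y) hσ hra
  obtain ⟨n, hk, hexit, hstay⟩ :=
    exists_kIndex_eq_add_two hσ_pos hτ hra (exists_iterate_le_of_expanding hσ hexpand hbelow)
  have hescape : leftFixedPoint σ (r * a) - leftKnot σ (r * a) ≤
      σ ^ n * (leftFixedPoint σ (r * a) - W (W (1 / 2))) := by
    rwa [iterate_eq_sub_pow_mul_of_lt_iterate hσ_pos hexpand hbelow hstay, sub_le_comm] at hexit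
  rw [leftFixedPoint_sub_leftKnot hσ_pos.ne' hσ.ne', hdist, ← mul_div_assoc,
    div_le_div_iff₀ (by positivity) hσ_sub] at hescape
  have hcancel : σ - 1 - 2 * (r * a) ≤ σ ^ n * (r * a * (σ * τ - σ - τ)) * (2 * σ) :=
    le_of_mul_le_mul_right (by linarith) hσ_sub
  calc σ * (σ - 1 - 2 * (r * a))
      ≤ σ * (σ ^ n * (r * a * (σ * τ - σ - τ)) * (2 * σ)) := by gcongr
    _ = σ ^ kIndex s₁ s₂ p q r a * (2 * (r * a) * (σ * τ - σ - τ)) := by rw [hk]; ring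

theorem one_div_mul_pow_kIndex_le (ha : 0 < a) (hr : 0 < r) (hσ : 1 < σ)
    (hpeak : τ * (r * a) < 1 / 2 + r * a) (hgap : 0 < s₁ - 1 + p * a - 2 * r * a)
    (hστ : 0 < σ * τ - σ - τ) :
    1 / (a * σ ^ kIndex s₁ s₂ p q r a) ≤
      2 * r * (σ * τ - σ - τ) / ((s₁ - 1 + p * a - 2 * r * a) * σ) := by
  have : 0 < σ := by linarith
  rw [div_le_div_iff₀ (by positivity) (by positivity)]
  linarith [mul_sub_le_pow_kIndex_mul hσ (mul_pos hr ha) hpeak hστ]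

end Orbit

section SmallParameter

variable {s₁ s₂ p q r : ℝ}

theorem mul_sub_sub_eq_of_holderConjugate (h : s₁.HolderConjugate s₂) (a : ℝ) :
    (s₁ + p * a) * (s₂ + q * a) - (s₁ + p * a) - (s₂ + q * a) =
      a * (q * s₁ + p * s₂ - p - q + p * q * a) := by
  linear_combination h.mul_eq_add

theorem eventually_one_div_mul_pow_kIndex_le (h : s₁.HolderConjugate s₂)
    (hpq : 0 < q * s₁ + p * s₂ - p - q) (hr : 0 < r) :
    ∀ᶠ a in 𝓝[>] (0 : ℝ), 1 / (a * (s₁ + p * a) ^ kIndex s₁ s₂ p q r a) ≤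
      2 * a * (r * (q * s₁ + p * s₂ - p - q) + r * p * q * a) /
        ((s₁ - 1 + p * a - 2 * r * a) * (s₁ + p * a)) := by
  have hs : ∀ᶠ a in 𝓝 (0 : ℝ), 1 < s₁ + p * a :=
    ContinuousAt.eventually_lt (by fun_prop) (by fun_prop) (by simpa using h.lt)
  have hpeak : ∀ᶠ a in 𝓝 (0 : ℝ), (s₂ + q * a) * (r * a) < 1 / 2 + r * a :=
    ContinuousAt.eventually_lt (by fun_prop) (by fun_prop) (by simp)
  have hgap : ∀ᶠ a in 𝓝 (0 : ℝ), 0 < s₁ - 1 + p * a - 2 * r * a :=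
    ContinuousAt.eventually_lt (by fun_prop) (by fun_prop) (by simpa using h.lt)
  have hst : ∀ᶠ a in 𝓝 (0 : ℝ), 0 < q * s₁ + p * s₂ - p - q + p * q * a :=
    ContinuousAt.eventually_lt (by fun_prop) (by fun_prop) (by simpa using hpq)
  filter_upwards [self_mem_nhdsWithin, nhdsWithin_le_nhds hs, nhdsWithin_le_nhds hpeak,
    nhdsWithin_le_nhds hgap, nhdsWithin_le_nhds hst] with a (ha : 0 < a) hs hpeak hgap hst
  have hfactor := mul_sub_sub_eq_of_holderConjugate (p := p) (q := q) h a
  have hbound := one_div_mul_pow_kIndex_le ha hr hs hpeak hgap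
    (by rw [hfactor]; exact mul_pos ha hst)
  rw [hfactor] at hbound
  convert hbound using 2
  ring

theorem tendsto_upper_bound_nhds_zero (hs₀ : s₁ ≠ 0) (hs₁ : s₁ ≠ 1) (C D : ℝ) :
    Tendsto (fun a => 2 * a * (C + D * a) / ((s₁ - 1 + p * a - 2 * r * a) * (s₁ + p * a)))
      (𝓝 0) (𝓝 0) := by
  have hcont : ContinuousAt
      (fun a => 2 * a * (C + D * a) / ((s₁ - 1 + p * a - 2 * r * a) * (s₁ + p * a))) 0 :=
    ContinuousAt.div (by fun_prop) (by fun_prop) (by simp [sub_ne_zero, hs₀, hs₁])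
  simpa using hcont.tendsto

theorem Wmap_inv_a_pow_k_tendsto_zero_eq_one_general (h : s₁.HolderConjugate s₂)
    (hpq : 0 < q * s₁ + p * s₂ - p - q) (hr : 0 < r) :
    Tendsto (fun a => 1 / (a * (s₁ + p * a) ^ kIndex s₁ s₂ p q r a))
      (𝓝[>] (0 : ℝ)) (𝓝 0) ∧
    ∃ a₀ > (0 : ℝ), ∀ a, 0 < a → a < a₀ →
      1 / (a * (s₁ + p * a) ^ kIndex s₁ s₂ p q r a) ≤
        2 * a * (r * (q * s₁ + p * s₂ - p - q) + r * p * q * a) /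
          ((s₁ - 1 + p * a - 2 * r * a) * (s₁ + p * a)) := by
  have hbound := eventually_one_div_mul_pow_kIndex_le h hpq hr
  have hpos : ∀ᶠ a in 𝓝 (0 : ℝ), 0 < s₁ + p * a :=
    ContinuousAt.eventually_lt (by fun_prop) (by fun_prop) (by simpa using h.pos)
  have hnonneg : ∀ᶠ a in 𝓝[>] (0 : ℝ), 0 ≤ 1 / (a * (s₁ + p * a) ^ kIndex s₁ s₂ p q r a) := by
    filter_upwards [self_mem_nhdsWithin, nhdsWithin_le_nhds hpos] with a (ha : 0 < a) hs
    positivity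
  have hlim := tendsto_upper_bound_nhds_zero (p := p) (r := r) h.ne_zero h.lt.ne'
    (r * (q * s₁ + p * s₂ - p - q)) (r * p * q)
  refine ⟨squeeze_zero' hnonneg hbound (hlim.mono_left nhdsWithin_le_nhds), ?_⟩
  obtain ⟨a₀, ha₀, hsub⟩ := mem_nhdsGT_iff_exists_Ioo_subset.1 hbound
  exact ⟨a₀, ha₀, fun a ha haa₀ => hsub ⟨ha, haa₀⟩⟩

end SmallParameter

/-- Lemma 3(III): if `1/s₁ + 1/s₂ = 1`, then `1/(a·(s₁+pa)^{k(a)}) → 0` as `a → 0⁺`;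
moreover for all sufficiently small `a > 0` the explicit upper bound holds. -/
theorem Wmap_inv_a_pow_k_tendsto_zero_eq_one
    (s₁ s₂ p q r : ℝ) (hs₁ : 1 < s₁) (hs₂ : 1 < s₂)
    (hp : 0 < p) (hq : 0 < q) (hr : 0 < r)
    (hsum : 1/s₁ + 1/s₂ = 1) :
    Tendsto (fun a => 1/(a * (s₁ + p*a)^(kIndex s₁ s₂ p q r a)))
      (𝓝[>] (0:ℝ)) (𝓝 0) ∧
    ∃ a₀ > (0:ℝ), ∀ a, 0 < a → a < a₀ →
      1/(a * (s₁ + p*a)^(kIndex s₁ s₂ p q r a)) ≤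
        2*a*(r*(q*s₁ + p*s₂ - p - q) + r*p*q*a) / ((s₁ - 1 + p*a - 2*r*a)*(s₁ + p*a)) :=
  Wmap_inv_a_pow_k_tendsto_zero_eq_one_general
    (Real.holderConjugate_iff.2 ⟨hs₁, by simpa only [one_div] using hsum⟩)
    (by linarith [mul_pos hq (sub_pos.2 hs₁), mul_pos hp (sub_pos.2 hs₂)]) hr
end
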